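/- arXiv:2109.15116 — 2 statements merged into one kernel-verified Lean document; each statement's English description precedes it below -/
import Mathlib

section
/- Let M be an oriented matroid program of rank r on [n] ∪ {f,g}, let M̂ be an extension of M/g by an element h in general position, and let ṽ be a node of K_f that is neither the source nor the sink of K_f. If there is a cocircuit Z of M̂/f with Z_h = + and Z_e ∈ {+,0} for all e ∈ ṽ, then ṽ is not a vertex of K_{[f,−h]} and not a vertex of K_{[−h,−f]}; consequently the monotone path in K_f from source to sink built from M̂ (by concatenating the component of K_{[f,−h]} containing the sink of K_h with the component of K_{[−h,−f]} containing the sink of K_h) does not pass through ṽ. -/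
/-!
A cocircuit `Z` of `Mhat / f`, extended by `0` at `f`, is orthogonal to every vector `X` of `Mhat`.
If `X` witnesses that `vt` lies in one of the two subdigraphs, then `X` is `+` on `vt ∪ {h}` and
zero at every other element except `f`, so `X · Z` is positive at `h` and negative nowhere, against
orthogonality.

Since contractions are specified through circuits, and vectors as the sign vectors orthogonal to
all covectors, orthogonality of `Z` and `X` rests on a piece of oriented matroid duality.

* `painting` is the Farkas lemma (4-painting lemma) for a family of covectors that is closed under
  negation and elimination; it is an induction on the number of sign-constrained elements, whose
  base case is the lifting of a vector through a contraction (`lift_many`).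
* `vectors_elim` deduces that the vectors of an oriented matroid satisfy (weak) vector elimination;
  this property is inherited by their restrictions.
* `exists_minimal_conformal`: in a family with that elimination property, for every member `X` and
  every `h` in its support there is a support-minimal member conforming to `X` and nonzero at `h`.

Applied to the vectors of `Mhat` and to their restrictions away from `f`, the last fact produces
a circuit of `Mhat / f` that conforms to `X` and is `+` at `h`; this circuit is not orthogonal
to `Z`.
-/

open Set

/-- A *sign vector* on an ambient type `α`. -/
abbrev SignVec (α : Type*) := α → SignType

namespace OMHK

variable {α : Type*}

/-- The support of a sign vector. -/
def supp (X : SignVec α) : Set α := {e | X e ≠ 0}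

/-- A sign vector is nonnegative if every entry is `+` or `0`. -/
def Nonneg (X : SignVec α) : Prop := ∀ e, X e = 1 ∨ X e = 0

/-- Composition of sign vectors: `(X ∘ Y)ₑ = Xₑ` if `Xₑ ≠ 0`, else `Yₑ`. -/
def compose (X Y : SignVec α) : SignVec α := fun e => if X e ≠ 0 then X e else Y e

/-- The separation set `S(X,Y) = {e : Xₑ = -Yₑ ≠ 0}`. -/
def sep (X Y : SignVec α) : Set α := {e | X e = -(Y e) ∧ X e ≠ 0}

/-- Two sign vectors are orthogonal if `S(X,Y)` and `S(X,-Y)` are both empty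
or both nonempty. -/
def Orth (X Y : SignVec α) : Prop :=
  (sep X Y = ∅ ∧ sep X (-Y) = ∅) ∨ (sep X Y ≠ ∅ ∧ sep X (-Y) ≠ ∅)

/-- An oriented matroid with finite ground set inside the ambient type `α`,
presented by its collection of covectors (sign vectors supported on the
ground set), satisfying the covector axioms. -/
structure OrientedMatroid (α : Type*) where
  ground : Set α
  ground_finite : ground.Finite
  covectors : Set (SignVec α)
  supp_subset : ∀ X ∈ covectors, supp X ⊆ ground
  zero_mem : (0 : SignVec α) ∈ covectors
  neg_mem : ∀ X ∈ covectors, -X ∈ covectors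
  compose_mem : ∀ X ∈ covectors, ∀ Y ∈ covectors, compose X Y ∈ covectors
  elim : ∀ X ∈ covectors, ∀ Y ∈ covectors, ∀ e ∈ sep X Y,
    ∃ Z ∈ covectors, Z e = 0 ∧ ∀ e' ∉ sep X Y, Z e' = compose X Y e'

namespace OrientedMatroid

variable (M : OrientedMatroid α)

/-- A cocircuit: a nonzero covector of minimal support. -/
def IsCocircuit (X : SignVec α) : Prop :=
  X ∈ M.covectors ∧ X ≠ 0 ∧
    ∀ Y ∈ M.covectors, Y ≠ 0 → supp Y ⊆ supp X → supp Y = supp X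

/-- A vector: a sign vector supported on the ground set and orthogonal to
every covector. -/
def IsVector (X : SignVec α) : Prop :=
  supp X ⊆ M.ground ∧ ∀ Y ∈ M.covectors, Orth X Y

/-- A circuit: a nonzero vector of minimal support. -/
def IsCircuit (X : SignVec α) : Prop :=
  M.IsVector X ∧ X ≠ 0 ∧
    ∀ Y, M.IsVector Y → Y ≠ 0 → supp Y ⊆ supp X → supp Y = supp X

/-- A set is independent if it is contained in the ground set and contains
the support of no circuit. -/
def Indep (A : Set α) : Prop :=
  A ⊆ M.ground ∧ ∀ X, M.IsCircuit X → ¬ supp X ⊆ A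

/-- The rank of a subset: maximal cardinality of an independent subset of it. -/
noncomputable def rk (A : Set α) : ℕ :=
  sSup {k | ∃ I : Set α, I ⊆ A ∧ M.Indep I ∧ I.ncard = k}

/-- The rank of the oriented matroid. -/
noncomputable def rank : ℕ := M.rk M.ground

end OrientedMatroid

open scoped Classical in
/-- Zero out the coordinates in `A` (the restriction to the complement of `A`,
in ambient terms). -/
noncomputable def restrictAway (A : Set α) (X : SignVec α) : SignVec α :=
  fun e => if e ∈ A then 0 else X e

/-- `M'` is the deletion `M ∖ A`: its ground set is `M.ground ∖ A` and its
circuits are the circuits of `M` vanishing on `A`. -/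
def IsDeletion (M : OrientedMatroid α) (A : Set α) (M' : OrientedMatroid α) : Prop :=
  M'.ground = M.ground \ A ∧
  ∀ X, M'.IsCircuit X ↔ (M.IsCircuit X ∧ ∀ e ∈ A, X e = 0)

/-- `M'` is the contraction `M / A`: its ground set is `M.ground ∖ A` and its
circuits are the nonzero minimal-support members of the restrictions away from
`A` of circuits of `M`. -/
def IsContraction (M : OrientedMatroid α) (A : Set α) (M' : OrientedMatroid α) : Prop :=
  M'.ground = M.ground \ A ∧
  ∀ X, M'.IsCircuit X ↔
    (X ≠ 0 ∧ (∃ Y, M.IsCircuit Y ∧ X = restrictAway A Y) ∧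
      ∀ Z : SignVec α, Z ≠ 0 → (∃ Y, M.IsCircuit Y ∧ Z = restrictAway A Y) →
        supp Z ⊆ supp X → supp Z = supp X)

/-- `Nh` is an extension of `N` by the new element `h` (same rank). -/
def IsExtension (N : OrientedMatroid α) (h : α) (Nh : OrientedMatroid α) : Prop :=
  h ∉ N.ground ∧ Nh.ground = insert h N.ground ∧ Nh.rank = N.rank ∧
    IsDeletion Nh {h} N

/-- The element `h` is in general position in `Nh`: every circuit whose support
contains `h` has support of cardinality `rank + 1`. -/
def GenPos (Nh : OrientedMatroid α) (h : α) : Prop :=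
  ∀ X, Nh.IsCircuit X → X h ≠ 0 → (supp X).ncard = Nh.rank + 1

/-- A directed path from `a` to `b` in the digraph with arc relation `A`. -/
def IsDipath {V : Type*} (A : V → V → Prop) (p : List V) (a b : V) : Prop :=
  p ≠ [] ∧ p.head? = some a ∧ p.getLast? = some b ∧ p.Chain' A ∧ p.Nodup

/-! ### Oriented matroid programs.
We fix the ambient type `ℕ`; the ground set of a program is `[n] ∪ {f, g}`
where `[n] = {0, …, n-1}`, the objective element is `f = n` and the right hand
side element is `g = n + 1`.  Extensions use the fresh element `h = n + 2`. -/

/-- `[n] = {0, …, n - 1}`. -/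
def nset (n : ℕ) : Set ℕ := {k | k < n}

/-- `M` is an oriented matroid program of rank `r` on `[n] ∪ {f, g}`
(`f = n`, `g = n + 1`), where `Mf` denotes the deletion `M ∖ f`:
(i) every nonnegative cocircuit of `M ∖ f` has `g` in its support;
(ii) for every `e ∈ [n]` there is a nonnegative cocircuit `Y` of `M ∖ f`
with `Y e = +`; (iii) every circuit of `M` whose support contains `f` has
support of cardinality `r + 1`. -/
def IsProgram (M Mf : OrientedMatroid ℕ) (n r : ℕ) : Prop :=
  M.ground = nset n ∪ {n, n + 1} ∧ M.rank = r ∧ IsDeletion M {n} Mf ∧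
  (∀ Y, Mf.IsCocircuit Y → Nonneg Y → Y (n + 1) ≠ 0) ∧
  (∀ e, e < n → ∃ Y, Mf.IsCocircuit Y ∧ Nonneg Y ∧ Y e = 1) ∧
  (∀ X, M.IsCircuit X → X n ≠ 0 → (supp X).ncard = r + 1)

/-- A node of the program: `[n] ∖ supp Y` for `Y` a nonnegative cocircuit of
`M ∖ f`. -/
def IsNode (Mf : OrientedMatroid ℕ) (n : ℕ) (v : Set ℕ) : Prop :=
  ∃ Y, Mf.IsCocircuit Y ∧ Nonneg Y ∧ v = nset n \ supp Y

/-- The arc relation of the digraph `K_f`: `v → v'` when `v, v'` are adjacent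
nodes and the witnessing cocircuit `Y''` of `M` (zero at `g`, positive on
`v' ∖ v`, negative on `v ∖ v'`, zero on `v ∩ v'`, nonzero at `f`) satisfies
`Y'' f = Y'' e` for `e ∈ v ∖ v'`. -/
def Arc (M Mf : OrientedMatroid ℕ) (n r : ℕ) (v v' : Set ℕ) : Prop :=
  IsNode Mf n v ∧ IsNode Mf n v' ∧ v ≠ v' ∧ M.rk (v ∩ v') = r - 2 ∧
  ∃ Y, M.IsCocircuit Y ∧ Y (n + 1) = 0 ∧
    (∀ e ∈ v' \ v, Y e = 1) ∧ (∀ e ∈ v \ v', Y e = -1) ∧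
    (∀ e ∈ v ∩ v', Y e = 0) ∧ Y n ≠ 0 ∧ (∀ e ∈ v \ v', Y n = Y e)

/-- The source of `K_f`: the node with no incoming arcs. -/
def IsSource (M Mf : OrientedMatroid ℕ) (n r : ℕ) (v : Set ℕ) : Prop :=
  IsNode Mf n v ∧ ∀ u, ¬ Arc M Mf n r u v

/-- The sink of `K_f`: the node with no outgoing arcs. -/
def IsSink (M Mf : OrientedMatroid ℕ) (n r : ℕ) (v : Set ℕ) : Prop :=
  IsNode Mf n v ∧ ∀ u, ¬ Arc M Mf n r v u

/-- The arc relation of the digraph `K_h` determined by an extension `M̂` of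
`M/g` by `h = n + 2` in general position; `Mhf` denotes `M̂ ∖ f`. -/
def ArcH (M Mf Mhf : OrientedMatroid ℕ) (n r : ℕ) (v v' : Set ℕ) : Prop :=
  IsNode Mf n v ∧ IsNode Mf n v' ∧ v ≠ v' ∧ M.rk (v ∩ v') = r - 2 ∧
  ∃ Y, Mhf.IsCocircuit Y ∧
    (∀ e ∈ v' \ v, Y e = 1) ∧ (∀ e ∈ v \ v', Y e = -1) ∧
    (∀ e ∈ v ∩ v', Y e = 0) ∧ Y (n + 2) ≠ 0 ∧ (∀ e ∈ v \ v', Y (n + 2) = Y e)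

/-- `x` is a vertex of the subdigraph `K_{[f,-h]}`: there is a vector `X` of
`M̂` with `X₊ = x ∪ {h}` and `X₋ = {f}`. -/
def InKfmh (Mhat : OrientedMatroid ℕ) (n : ℕ) (x : Set ℕ) : Prop :=
  ∃ X, Mhat.IsVector X ∧ {e | X e = 1} = x ∪ {n + 2} ∧ {e | X e = -1} = {n}

/-- `x` is a vertex of the subdigraph `K_{[-h,-f]}`: there is a vector `X` of
`M̂` with `X₊ = x ∪ {f, h}` and `X₋ = ∅`. -/
def InKmhmf (Mhat : OrientedMatroid ℕ) (n : ℕ) (x : Set ℕ) : Prop :=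
  ∃ X, Mhat.IsVector X ∧ {e | X e = 1} = x ∪ {n, n + 2} ∧ {e | X e = -1} = (∅ : Set ℕ)

end OMHK
namespace OMHK

open OrientedMatroid

/-! ### Orthogonality in terms of products -/

/-- Orthogonality, phrased through the signs of the entrywise product. -/
def POrth {α : Type*} (X Y : SignVec α) : Prop :=
  (∃ e, X e * Y e = 1) ↔ (∃ e, X e * Y e = -1)

lemma mem_sep_iff {α : Type*} (X Y : SignVec α) (e : α) : e ∈ sep X Y ↔ X e * Y e = -1 := by
  have : ∀ a b : SignType, (a = -b ∧ a ≠ 0) ↔ a * b = -1 := by decide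
  exact this _ _

lemma mem_sep_neg_iff {α : Type*} (X Y : SignVec α) (e : α) :
    e ∈ sep X (-Y) ↔ X e * Y e = 1 := by
  have : ∀ a b : SignType, (a = - -b ∧ a ≠ 0) ↔ a * b = 1 := by decide
  exact this _ _

lemma orth_iff {α : Type*} (X Y : SignVec α) : Orth X Y ↔ POrth X Y := by
  have h1 : sep X Y ≠ ∅ ↔ ∃ e, X e * Y e = -1 := by
    rw [← Set.nonempty_iff_ne_empty]
    exact exists_congr fun e => mem_sep_iff X Y e
  have h2 : sep X (-Y) ≠ ∅ ↔ ∃ e, X e * Y e = 1 := by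
    rw [← Set.nonempty_iff_ne_empty]
    exact exists_congr fun e => mem_sep_neg_iff X Y e
  unfold Orth POrth
  rw [← h1, ← h2]
  tauto

/-- A family of sign vectors with the two covector axioms that matter for duality: closure under
negation and elimination. -/
structure CovFam {α : Type*} (F : Set (SignVec α)) : Prop where
  neg : ∀ X ∈ F, -X ∈ F
  elim : ∀ X ∈ F, ∀ Y ∈ F, ∀ e ∈ sep X Y,
    ∃ Z ∈ F, Z e = 0 ∧ ∀ a ∉ sep X Y, Z a = compose X Y a

/-- To be orthogonal to a family closed under negation, it suffices never to have a product
that is nonnegative and nonzero. -/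
lemma pOrth_of_forall {α : Type*} {F : Set (SignVec α)} (hF : ∀ X ∈ F, -X ∈ F) (X : SignVec α)
    (h : ∀ Y ∈ F, (∃ e, X e * Y e = 1) → ∃ e, X e * Y e = -1) : ∀ Y ∈ F, POrth X Y := by
  intro Y hY
  refine ⟨h Y hY, ?_⟩
  rintro ⟨e, he⟩
  have h3 : ∀ a b : SignType, a * -b = -1 ↔ a * b = 1 := by decide
  have h4 : ∀ a b : SignType, a * -b = 1 ↔ a * b = -1 := by decide
  obtain ⟨a, ha⟩ := h (-Y) (hF Y hY) ⟨e, (h4 _ _).2 he⟩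
  exact ⟨a, (h3 _ _).1 ha⟩

/-! ### Lifting vectors through a contraction -/

/-- The elimination step behind `lift_one`: covectors `Y`, `Y'`, both `+` at `c`, with
`X · Y ≤ 0` and `X · Y' ≥ 0` away from `c`, cannot have one of these products nonzero away
from `c`, if `X` is orthogonal to all covectors vanishing at `c`. -/
lemma lift_aux {α : Type*} {F : Set (SignVec α)} (hF : CovFam F) (X : SignVec α) (c : α)
    (hX : ∀ Y ∈ F, Y c = 0 → POrth X Y) (Y Y' : SignVec α)
    (hY : Y ∈ F) (hY' : Y' ∈ F) (hYc : Y c = 1) (hYc' : Y' c = 1)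
    (h1 : ∀ e, X e * Y e ≠ 1) (h2 : ∀ e, X e * Y' e ≠ -1) (d : α)
    (hd : X d * Y d = -1 ∨ X d * Y' d = 1) : False := by
  have hs : c ∈ sep Y (-Y') := by rw [mem_sep_neg_iff, hYc, hYc']; rfl
  obtain ⟨Z, hZ, hZc, hZe⟩ := hF.elim Y hY (-Y') (hF.neg _ hY') c hs
  -- On the support of `X` the covectors `Y` and `-Y'` are never of opposite sign, so there
  -- `Z` is their composition.
  have key : ∀ e, X e ≠ 0 → Z e = compose Y (-Y') e := by
    intro e he
    apply hZe
    rw [mem_sep_neg_iff]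
    have : ∀ x y y' : SignType, x ≠ 0 → x * y ≠ 1 → x * y' ≠ -1 → ¬ y * y' = 1 := by decide
    exact this _ _ _ he (h1 e) (h2 e)
  have hc : ∀ x y y' : SignType, x * y ≠ 1 → x * y' ≠ -1 →
      x * (if y ≠ 0 then y else -y') ≠ 1 := by decide
  have hc' : ∀ x y y' : SignType, x * y ≠ 1 → x * y' ≠ -1 → (x * y = -1 ∨ x * y' = 1) →
      x * (if y ≠ 0 then y else -y') = -1 := by decide
  have hdX : X d ≠ 0 := by
    intro h0
    rw [h0] at hd
    revert hd
    generalize Y d = a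
    generalize Y' d = b
    revert a b
    decide
  have hneg : ∃ e, X e * Z e = -1 := by
    refine ⟨d, ?_⟩
    rw [key d hdX]
    exact hc' _ _ _ (h1 d) (h2 d) hd
  obtain ⟨e, he⟩ := (hX Z hZ hZc).2 hneg
  have heX : X e ≠ 0 := by
    intro h0
    rw [h0, zero_mul] at he
    exact absurd he (by decide)
  rw [key e heX] at he
  exact hc _ _ _ (h1 e) (h2 e) he

/-- A sign vector orthogonal to all covectors vanishing at `c` becomes orthogonal to all covectors
after a suitable change of its entry at `c`. -/
lemma lift_one {α : Type*} {F : Set (SignVec α)} (hF : CovFam F) (X : SignVec α) (c : α)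
    (hX : ∀ Y ∈ F, Y c = 0 → POrth X Y) :
    ∃ X' : SignVec α, (∀ e, e ≠ c → X' e = X e) ∧ ∀ Y ∈ F, POrth X' Y := by
  classical
  let U : SignType → SignVec α := fun s => Function.update X c s
  have Uc : ∀ s, U s c = s := fun s => Function.update_self ..
  have Ue : ∀ s e, e ≠ c → U s e = X e := fun s e he => Function.update_of_ne he ..
  by_contra hcon
  have fails : ∀ s, ∃ Y ∈ F, (∃ e, U s e * Y e = 1) ∧ ∀ e, U s e * Y e ≠ -1 := by
    intro s
    by_contra hs
    refine hcon ⟨U s, Ue s, pOrth_of_forall hF.neg _ fun Y hY h1 => ?_⟩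
    by_contra h2
    exact hs ⟨Y, hY, h1, fun e he => h2 ⟨e, he⟩⟩
  -- A covector vanishing at `c` cannot tell `U s` from `X`.
  have hU : ∀ s, ∀ Y ∈ F, Y c = 0 → POrth (U s) Y := by
    intro s Y hY hYc
    have : ∀ e, U s e * Y e = X e * Y e := by
      intro e
      by_cases he : e = c
      · subst he; rw [hYc, mul_zero, mul_zero]
      · rw [Ue s e he]
    simpa only [POrth, this] using hX Y hY hYc
  have hne : ∀ s, ∀ Y ∈ F, (∃ e, U s e * Y e = 1) → (∀ e, U s e * Y e ≠ -1) → Y c ≠ 0 := by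
    intro s Y hY h1 h2 h0
    obtain ⟨e, he⟩ := (hU s Y hY h0).1 h1
    exact h2 e he
  have off : ∀ s e, e ≠ c → U s e = U 0 e := fun s e he => by rw [Ue s e he, Ue 0 e he]
  obtain ⟨P, hP, hP1, hP2⟩ := fails 1
  obtain ⟨N, hN, hN1, hN2⟩ := fails (-1)
  obtain ⟨Q, hQ, ⟨d, hd⟩, hQ2⟩ := fails 0
  have hPc : P c = 1 := by
    have h := hP2 c
    have h' := hne _ P hP hP1 hP2
    rw [Uc] at h
    revert h h'
    generalize P c = a
    revert a
    decide
  have hNc : N c = -1 := by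
    have h := hN2 c
    have h' := hne _ N hN hN1 hN2
    rw [Uc] at h
    revert h h'
    generalize N c = a
    revert a
    decide
  have hP0 : ∀ e, U 0 e * P e ≠ -1 := by
    intro e
    by_cases he : e = c
    · subst he; rw [Uc, zero_mul]; decide
    · rw [← off 1 e he]; exact hP2 e
  have hN0 : ∀ e, U 0 e * (-N) e ≠ 1 := by
    intro e
    by_cases he : e = c
    · subst he; rw [Uc, zero_mul]; decide
    · rw [← off (-1) e he]
      have : ∀ x y : SignType, x * y ≠ -1 → x * -y ≠ 1 := by decide
      exact this _ _ (hN2 e)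
  have hNc' : (-N) c = 1 := by rw [Pi.neg_apply, hNc]; rfl
  have hQc := hne 0 Q hQ ⟨d, hd⟩ hQ2
  have hQs : Q c = 1 ∨ Q c = -1 := by
    revert hQc
    generalize Q c = a
    revert a
    decide
  rcases hQs with hq | hq
  · exact lift_aux hF (U 0) c (hU 0) (-N) Q (hF.neg _ hN) hQ hNc' hq hN0 hQ2 d (Or.inr hd)
  · have hq' : (-Q) c = 1 := by rw [Pi.neg_apply, hq]; rfl
    have h3 : ∀ x y : SignType, x * y ≠ -1 → x * -y ≠ 1 := by decide
    have h4 : ∀ x y : SignType, x * y = 1 → x * -y = -1 := by decide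
    exact lift_aux hF (U 0) c (hU 0) (-Q) P (hF.neg _ hQ) hP hq' hPc
      (fun e => h3 _ _ (hQ2 e)) hP0 d (Or.inl (h4 _ _ hd))

lemma lift_many {α : Type*} [DecidableEq α] {F : Set (SignVec α)} (hF : CovFam F)
    (C : Finset α) : ∀ X : SignVec α,
    (∀ Y ∈ F, (∀ c ∈ C, Y c = 0) → POrth X Y) →
    ∃ X' : SignVec α, (∀ e, e ∉ C → X' e = X e) ∧ ∀ Y ∈ F, POrth X' Y := by
  induction C using Finset.induction_on with
  | empty => exact fun X hX => ⟨X, fun _ _ => rfl, fun Y hY => hX Y hY (by simp)⟩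
  | insert c C hc ih =>
    intro X hX
    have hF' : CovFam {Y | Y ∈ F ∧ ∀ c ∈ C, Y c = 0} := by
      refine ⟨fun Y hY => ⟨hF.neg _ hY.1, fun c hc => ?_⟩, fun Y hY Y' hY' e he => ?_⟩
      · rw [Pi.neg_apply, hY.2 c hc]; rfl
      · obtain ⟨Z, hZ, hZe, hZ'⟩ := hF.elim Y hY.1 Y' hY'.1 e he
        refine ⟨Z, ⟨hZ, fun c hc => ?_⟩, hZe, hZ'⟩
        rw [hZ' c (fun h => h.2 (hY.2 c hc))]
        simp [compose, hY.2 c hc, hY'.2 c hc]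
    obtain ⟨X1, hX1, hX1'⟩ := lift_one hF' X c fun Y hY hYc =>
      hX Y hY.1 fun a ha => by
        rcases Finset.mem_insert.1 ha with rfl | ha
        · exact hYc
        · exact hY.2 a ha
    obtain ⟨X2, hX2, hX2'⟩ := ih X1 fun Y hY hYC => hX1' Y ⟨hY, hYC⟩
    refine ⟨X2, fun e he => ?_, hX2'⟩
    rw [Finset.mem_insert, not_or] at he
    rw [hX2 e he.2, hX1 e he.1]

/-! ### The painting lemma and vector elimination -/

/-- Farkas lemma for covector families.  The elements of `A` and the element `e` are constrained by
the signs of `T`, covectors have to vanish on `C`, and vectors have to vanish outside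
`{e} ∪ A ∪ C`.  If no covector fits with sign `T e` at `e`, then some vector does. -/
lemma painting {α : Type*} [DecidableEq α] {F : Set (SignVec α)} (hF : CovFam F)
    (T : SignVec α) (e : α) (hTe : T e ≠ 0) (A : Finset α) : ∀ C : Finset α,
    e ∉ A → e ∉ C → Disjoint A C →
    (∀ Y ∈ F, (∀ c ∈ C, Y c = 0) → (∀ a ∈ A, T a * Y a ≠ -1) → T e * Y e ≠ 1) →
    ∃ X : SignVec α, (∀ Y ∈ F, POrth X Y) ∧ X e = T e ∧ (∀ a ∈ A, X a = T a ∨ X a = 0) ∧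
      ∀ b, b ≠ e → b ∉ A → b ∉ C → X b = 0 := by
  induction A using Finset.induction_on with
  | empty =>
    intro C _ heC _ hno
    let X : SignVec α := fun b => if b = e then T e else 0
    have hX : ∀ Y ∈ F, (∀ c ∈ C, Y c = 0) → POrth X Y := by
      intro Y hY hYC
      have h1 := hno Y hY hYC (by simp)
      have h2 := hno (-Y) (hF.neg _ hY) (fun c hc => by rw [Pi.neg_apply, hYC c hc]; rfl) (by simp)
      have hY0 : Y e = 0 := by
        rw [Pi.neg_apply] at h2
        revert hTe h1 h2
        generalize T e = t
        generalize Y e = y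
        revert t y
        decide
      have : ∀ b, X b * Y b = 0 := by
        intro b
        by_cases hb : b = e
        · subst hb; rw [hY0, mul_zero]
        · simp [X, hb]
      simp only [POrth, this]
      simp
    obtain ⟨X', h1, h2⟩ := lift_many hF C X hX
    refine ⟨X', h2, ?_, by simp, ?_⟩
    · rw [h1 e heC]; simp [X]
    · intro b hb _ hbC
      rw [h1 b hbC]; simp [X, hb]
  | insert a A haA ih =>
    intro C heA heC hdis hno
    rw [Finset.mem_insert, not_or] at heA
    rw [Finset.disjoint_insert_left] at hdis
    -- Either `a` can be deleted, or a covector with the wrong sign at `a` exists; the latter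
    -- forces the right sign at `a` on the vector obtained by contracting `a`.
    by_cases hdel : ∀ Y ∈ F, (∀ c ∈ C, Y c = 0) → (∀ a ∈ A, T a * Y a ≠ -1) → T e * Y e ≠ 1
    · obtain ⟨X, h1, h2, h3, h4⟩ := ih C heA.2 heC hdis.2 hdel
      refine ⟨X, h1, h2, ?_, ?_⟩
      · intro b hb
        rcases Finset.mem_insert.1 hb with rfl | hb
        · exact Or.inr (h4 _ (Ne.symm heA.1) haA hdis.1)
        · exact h3 b hb
      · intro b hbe hbA hbC
        rw [Finset.mem_insert, not_or] at hbA
        exact h4 b hbe hbA.2 hbC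
    · push Not at hdel
      obtain ⟨Y, hY, hYC, hYA, hYe⟩ := hdel
      have hYa : T a * Y a = -1 := by
        by_contra h
        refine hno Y hY hYC (fun b hb => ?_) hYe
        rcases Finset.mem_insert.1 hb with rfl | hb
        · exact h
        · exact hYA b hb
      obtain ⟨X, h1, h2, h3, h4⟩ := ih (insert a C) heA.2
        (by rw [Finset.mem_insert, not_or]; exact ⟨heA.1, heC⟩)
        (by rw [Finset.disjoint_insert_right]; exact ⟨haA, hdis.2⟩)
        (fun W hW hWC hWA => hno W hW (fun c hc => hWC c (Finset.mem_insert_of_mem hc))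
          (fun b hb => by
            rcases Finset.mem_insert.1 hb with rfl | hb
            · rw [hWC _ (Finset.mem_insert_self _ _), mul_zero]; decide
            · exact hWA b hb))
      have hXa : X a = T a := by
        obtain ⟨b, hb⟩ := (h1 Y hY).1 ⟨e, by rw [h2]; exact hYe⟩
        by_cases hba : b = a
        · subst hba
          have : ∀ x t y : SignType, t * y = -1 → x * y = -1 → x = t := by decide
          exact this _ _ _ hYa hb
        exfalso
        by_cases hbe : b = e
        · subst hbe
          rw [h2, hYe] at hb
          exact absurd hb (by decide)
        by_cases hbC : b ∈ C
        · rw [hYC b hbC, mul_zero] at hb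
          exact absurd hb (by decide)
        by_cases hbA : b ∈ A
        · rcases h3 b hbA with h | h
          · rw [h] at hb; exact hYA b hbA hb
          · rw [h, zero_mul] at hb
            exact absurd hb (by decide)
        · rw [h4 b hbe hbA (by rw [Finset.mem_insert, not_or]; exact ⟨hba, hbC⟩), zero_mul] at hb
          exact absurd hb (by decide)
      refine ⟨X, h1, h2, ?_, ?_⟩
      · intro b hb
        rcases Finset.mem_insert.1 hb with rfl | hb
        · exact Or.inl hXa
        · exact h3 b hb
      · intro b hbe hbA hbC
        rw [Finset.mem_insert, not_or] at hbA
        exact h4 b hbe hbA.2 (by rw [Finset.mem_insert, not_or]; exact ⟨hbA.1, hbC⟩)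

/-- A family of sign vectors closed under negation and under weak elimination: the eliminated
vector keeps the entry of `X` at a prescribed `h`, and away from `S(X, Y)` it only has to conform
to `X ∘ Y`. -/
structure VecFam {α : Type*} (V : Set (SignVec α)) : Prop where
  neg : ∀ X ∈ V, -X ∈ V
  elim : ∀ X ∈ V, ∀ Y ∈ V, ∀ e ∈ sep X Y, ∀ h ∉ sep X Y, X h ≠ 0 →
    ∃ Z ∈ V, Z e = 0 ∧ Z h = X h ∧ ∀ a ∉ sep X Y, Z a = compose X Y a ∨ Z a = 0

lemma vectors_elim {α : Type*} (M : OrientedMatroid α) : VecFam {X | M.IsVector X} := by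
  classical
  have hF : CovFam M.covectors := ⟨M.neg_mem, M.elim⟩
  refine ⟨?_, ?_⟩
  · rintro X ⟨hX, hX'⟩
    refine ⟨fun e he => hX fun h0 => he (by rw [Pi.neg_apply, h0]; rfl), fun Y hY => ?_⟩
    have h := (orth_iff X (-Y)).1 (hX' (-Y) (M.neg_mem Y hY))
    rw [orth_iff]
    have h2 : ∀ a b : SignType, -a * b = a * -b := by decide
    simpa only [POrth, Pi.neg_apply, h2] using h
  · intro X hX Y hY e he h hh hXh
    have fs : (supp X ∪ supp Y).Finite := M.ground_finite.subset (union_subset hX.1 hY.1)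
    have hsepX : sep X Y ⊆ supp X := fun a ha => ha.2
    let A : Finset α := (fs.subset (sdiff_subset :
      (supp X ∪ supp Y) \ (sep X Y ∪ {h}) ⊆ supp X ∪ supp Y)).toFinset
    let C : Finset α := (fs.subset (sdiff_subset.trans (hsepX.trans subset_union_left) :
      sep X Y \ {e} ⊆ supp X ∪ supp Y)).toFinset
    have memA : ∀ a, a ∈ A ↔ a ∈ (supp X ∪ supp Y) \ (sep X Y ∪ {h}) := by simp [A]
    have memC : ∀ a, a ∈ C ↔ a ∈ sep X Y \ {e} := by simp [C]
    have hTh : compose X Y h = X h := by simp [compose, hXh]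
    obtain ⟨Z, hZ1, hZ2, hZ3, hZ4⟩ := painting hF (compose X Y) h (by rw [hTh]; exact hXh) A C
      (by rw [memA]; exact fun hm => hm.2 (Or.inr rfl))
      (by rw [memC]; exact fun hm => hh hm.1)
      (by
        rw [Finset.disjoint_left]
        intro a ha ha'
        rw [memA] at ha
        rw [memC] at ha'
        exact ha.2 (Or.inl ha'.1))
      (by
        intro W hW hWC hWA hWh
        rw [hTh] at hWh
        -- Such a covector `W` has nonnegative product with both `X` and `Y` away from `e`.
        have hWA' : ∀ a, a ≠ e → X a * W a ≠ -1 ∧ Y a * W a ≠ -1 := by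
          intro a hae
          by_cases has : a ∈ sep X Y
          · rw [hWC a ((memC a).2 ⟨has, hae⟩), mul_zero, mul_zero]
            decide
          have hT : compose X Y a * W a ≠ -1 := by
            by_cases hah : a = h
            · subst hah
              rw [hTh, hWh]
              decide
            by_cases hs : a ∈ supp X ∪ supp Y
            · exact hWA a ((memA a).2 ⟨hs, fun hm => hm.elim has hah⟩)
            · have h1 : X a = 0 := by
                by_contra h; exact hs (Or.inl h)
              have h2 : Y a = 0 := by
                by_contra h; exact hs (Or.inr h)
              simp only [compose, h1, h2]
              simp
          rw [mem_sep_iff] at has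
          have : ∀ x y w : SignType, x * y ≠ -1 → (if x ≠ 0 then x else y) * w ≠ -1 →
              x * w ≠ -1 ∧ y * w ≠ -1 := by decide
          exact this _ _ _ has hT
        obtain ⟨b, hb⟩ := ((orth_iff X W).1 (hX.2 W hW)).1 ⟨h, hWh⟩
        have hbe : b = e := by
          by_contra hbe
          exact (hWA' b hbe).1 hb
        subst hbe
        rw [mem_sep_iff] at he
        have : ∀ x y w : SignType, x * y = -1 → x * w = -1 → y * w = 1 := by decide
        obtain ⟨d, hd⟩ := ((orth_iff Y W).1 (hY.2 W hW)).1 ⟨b, this _ _ _ he hb⟩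
        by_cases hdb : d = b
        · subst hdb
          rw [this _ _ _ he hb] at hd
          exact absurd hd (by decide)
        · exact (hWA' d hdb).2 hd)
    have hZs : ∀ a, a ∉ supp X ∪ supp Y → Z a = 0 := by
      intro a ha
      refine hZ4 a ?_ (fun hm => ha ((memA a).1 hm).1)
        (fun hm => ha (Or.inl (hsepX ((memC a).1 hm).1)))
      rintro rfl
      exact ha (Or.inl hXh)
    refine ⟨Z, ⟨fun a ha => ?_, fun W hW => (orth_iff Z W).2 (hZ1 W hW)⟩, ?_, ?_, ?_⟩
    · by_contra hg
      exact ha (hZs a fun hm => hg (union_subset hX.1 hY.1 hm))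
    · refine hZ4 e ?_ ?_ ?_
      · rintro rfl; exact hh he
      · rw [memA]; exact fun hm => hm.2 (Or.inl he)
      · rw [memC]; exact fun hm => hm.2 rfl
    · rw [hZ2, hTh]
    · intro a ha
      by_cases hah : a = h
      · subst hah; exact Or.inl hZ2
      by_cases hs : a ∈ supp X ∪ supp Y
      · exact hZ3 a ((memA a).2 ⟨hs, fun hm => hm.elim ha hah⟩)
      · exact Or.inr (hZs a hs)

lemma restrict_vecFam {α : Type*} {V : Set (SignVec α)} (hV : VecFam V) (f : α) :
    VecFam (restrictAway {f} '' V) := by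
  have r0 : ∀ X : SignVec α, restrictAway {f} X f = 0 := fun X => by simp [restrictAway]
  have r1 : ∀ (X : SignVec α) (a : α), a ≠ f → restrictAway {f} X a = X a :=
    fun X a ha => by simp [restrictAway, ha]
  refine ⟨?_, ?_⟩
  · rintro _ ⟨X, hX, rfl⟩
    refine ⟨-X, hV.neg X hX, ?_⟩
    funext a
    by_cases ha : a = f
    · subst ha; rw [Pi.neg_apply, r0, r0]; rfl
    · rw [Pi.neg_apply, r1 _ _ ha, r1 _ _ ha, Pi.neg_apply]
  · rintro _ ⟨X, hX, rfl⟩ _ ⟨Y, hY, rfl⟩ e he h hh hXh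
    have hsep : ∀ a, a ≠ f →
        (a ∈ sep (restrictAway {f} X) (restrictAway {f} Y) ↔ a ∈ sep X Y) := by
      intro a ha
      rw [mem_sep_iff, mem_sep_iff, r1 _ _ ha, r1 _ _ ha]
    have hef : e ≠ f := by
      rintro rfl
      exact he.2 (r0 X)
    have hhf : h ≠ f := by
      rintro rfl
      exact hXh (r0 X)
    rw [hsep e hef] at he
    rw [hsep h hhf] at hh
    rw [r1 _ _ hhf] at hXh
    obtain ⟨Z, hZ, h1, h2, h3⟩ := hV.elim X hX Y hY e he h hh hXh
    refine ⟨restrictAway {f} Z, ⟨Z, hZ, rfl⟩, ?_, ?_, ?_⟩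
    · rw [r1 _ _ hef, h1]
    · rw [r1 _ _ hhf, r1 _ _ hhf, h2]
    · intro a ha
      by_cases haf : a = f
      · subst haf; exact Or.inr (r0 Z)
      · rw [hsep a haf] at ha
        simpa only [compose, r1 _ _ haf] using h3 a ha

/-! ### Conformal support-minimal vectors -/

/-- If `X` is compared with some `W` of smaller support that agrees with `X` at `h`, repeated
elimination of the elements of `S(X, W)` yields a member conforming to `X`, of smaller support. -/
lemma exists_conformal_of_agree {α : Type*} {V : Set (SignVec α)} (hV : VecFam V)
    (X : SignVec α) (hX : X ∈ V) (hfin : (supp X).Finite) (h : α) (hXh : X h ≠ 0) :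
    ∀ (k : ℕ) (W : SignVec α), (sep X W).ncard = k → W ∈ V → supp W ⊂ supp X → W h = X h →
      ∃ X' ∈ V, X' h = X h ∧ (∀ a, X' a = X a ∨ X' a = 0) ∧ supp X' ⊂ supp X := by
  intro k
  induction k using Nat.strong_induction_on with
  | _ k ih =>
    intro W hk hW hWX hWh
    rcases (sep X W).eq_empty_or_nonempty with hemp | ⟨e, he⟩
    · refine ⟨W, hW, hWh, fun a => ?_, hWX⟩
      by_cases hWa : W a = 0
      · exact Or.inr hWa
      left
      have h1 : X a ≠ 0 := hWX.1 hWa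
      have h2 : ¬ X a * W a = -1 := by
        rw [← mem_sep_iff, hemp]; exact fun h => h
      have : ∀ x w : SignType, w ≠ 0 → x ≠ 0 → ¬ x * w = -1 → w = x := by decide
      exact this _ _ hWa h1 h2
    · have hh : h ∉ sep X W := by
        rw [mem_sep_iff, hWh]
        have : ∀ x : SignType, ¬ x * x = -1 := by decide
        exact this _
      obtain ⟨Z, hZ, h1, h2, h3⟩ := hV.elim X hX W hW e he h hh hXh
      have hZX : supp Z ⊆ supp X := by
        intro a ha
        by_contra hXa
        have hXa' : X a = 0 := by
          by_contra h; exact hXa h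
        have hWa : W a = 0 := by
          by_contra h; exact hXa (hWX.1 h)
        rcases h3 a (fun hs => hXa hs.2) with h | h
        · exact ha (by rw [h]; simp [compose, hXa', hWa])
        · exact ha h
      refine ih _ ?_ Z rfl hZ ⟨hZX, fun hc => hc he.2 h1⟩ h2
      rw [← hk]
      refine Set.ncard_lt_ncard ⟨fun a ha => ?_, fun hc => ?_⟩ (hfin.subset fun a ha => ha.2)
      · by_contra hs
        rcases h3 a hs with h | h
        · rw [mem_sep_iff, h] at ha
          rw [mem_sep_iff] at hs
          have : ∀ x w : SignType, x * (if x ≠ 0 then x else w) ≠ -1 := by decide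
          exact this _ _ ha
        · rw [mem_sep_iff, h, mul_zero] at ha
          exact absurd ha (by decide)
      · have := hc he
        rw [mem_sep_iff, h1, mul_zero] at this
        exact absurd this (by decide)

lemma supp_neg' {α : Type*} (X : SignVec α) : supp (-X) = supp X := by
  ext a
  have : ∀ x : SignType, -x ≠ 0 ↔ x ≠ 0 := by decide
  exact this _

/-- Below every member of a family with vector elimination, and through every element of its
support, there is a conforming member of minimal support. -/
lemma exists_minimal_conformal {α : Type*} {V : Set (SignVec α)} (hV : VecFam V) (h : α) :
    ∀ (k : ℕ) (X : SignVec α), (supp X).ncard = k → X ∈ V → (supp X).Finite → X h ≠ 0 →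
      ∃ W ∈ V, W h = X h ∧ (∀ a, W a = X a ∨ W a = 0) ∧
        ∀ Y ∈ V, Y ≠ 0 → supp Y ⊆ supp W → supp Y = supp W := by
  intro k
  induction k using Nat.strong_induction_on with
  | _ k ih =>
    intro X hk hX hfin hXh
    by_cases hmin : ∀ Y ∈ V, Y ≠ 0 → supp Y ⊆ supp X → supp Y = supp X
    · exact ⟨X, hX, rfl, fun a => Or.inl rfl, hmin⟩
    push Not at hmin
    obtain ⟨Y, hY, hY0, hYX, hYne⟩ := hmin
    have hss : supp Y ⊂ supp X := hYX.ssubset_of_ne hYne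
    have agree : ∃ W ∈ V, supp W ⊂ supp X ∧ W h = X h := by
      have tri : ∀ x y : SignType, x ≠ 0 → y = x ∨ -y = x ∨ y = 0 := by decide
      rcases tri (X h) (Y h) hXh with hc | hc | hc
      · exact ⟨Y, hY, hss, hc⟩
      · exact ⟨-Y, hV.neg Y hY, by rw [supp_neg']; exact hss, hc⟩
      · -- Up to sign, `Y` is separated from `X` somewhere, and elimination keeps the entry at `h`.
        have hY' : ∃ Y' ∈ V, supp Y' ⊂ supp X ∧ Y' h = 0 ∧ ∃ e, e ∈ sep X Y' := by
          obtain ⟨e, he⟩ := Function.ne_iff.1 hY0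
          have hXe : X e ≠ 0 := hYX he
          have two : ∀ x y : SignType, x ≠ 0 → y ≠ 0 → x * y = -1 ∨ x * -y = -1 := by decide
          rcases two _ _ hXe he with hs | hs
          · exact ⟨Y, hY, hss, hc, e, (mem_sep_iff _ _ _).2 hs⟩
          · refine ⟨-Y, hV.neg Y hY, by rw [supp_neg']; exact hss, ?_, e,
              (mem_sep_iff _ _ _).2 hs⟩
            rw [Pi.neg_apply, hc]; rfl
        obtain ⟨Y', hY', hss', hc', e, he⟩ := hY'
        have hh : h ∉ sep X Y' := by
          rw [mem_sep_iff, hc', mul_zero]; decide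
        obtain ⟨Z, hZ, h1, h2, h3⟩ := hV.elim X hX Y' hY' e he h hh hXh
        refine ⟨Z, hZ, ⟨fun a ha => ?_, fun hcon => hcon he.2 h1⟩, h2⟩
        by_contra hXa
        have hXa' : X a = 0 := by
          by_contra h; exact hXa h
        have hYa : Y' a = 0 := by
          by_contra h; exact hXa (hss'.1 h)
        rcases h3 a (fun hs => hXa hs.2) with h | h
        · exact ha (by rw [h]; simp [compose, hXa', hYa])
        · exact ha h
    obtain ⟨W, hW, hWX, hWh⟩ := agree
    obtain ⟨X', hX', h1, h2, h3⟩ :=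
      exists_conformal_of_agree hV X hX hfin h hXh _ W rfl hW hWX hWh
    obtain ⟨U, hU, hU1, hU2, hU3⟩ := ih _ (by rw [← hk]; exact Set.ncard_lt_ncard h3 hfin) X' rfl
      hX' (hfin.subset h3.1) (by rw [h1]; exact hXh)
    refine ⟨U, hU, by rw [hU1, h1], fun a => ?_, hU3⟩
    rcases hU2 a with h | h
    · rw [h]; exact h2 a
    · exact Or.inr h

/-! ### Circuits of a contraction -/

/-- Every vector `X` of `M` that is nonzero at some `h ≠ f` has a circuit of `M / f` conforming to
it and nonzero at `h`. -/
lemma exists_contraction_circuit {α : Type*} {M N : OrientedMatroid α} {f : α}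
    (hN : IsContraction M {f} N) (X : SignVec α) (hX : M.IsVector X) (h : α) (hhf : h ≠ f)
    (hXh : X h ≠ 0) :
    ∃ W, N.IsCircuit W ∧ W h = X h ∧ W f = 0 ∧ ∀ a, W a = X a ∨ W a = 0 := by
  have r0 : ∀ X : SignVec α, restrictAway {f} X f = 0 := fun X => by simp [restrictAway]
  have r1 : ∀ (X : SignVec α) (a : α), a ≠ f → restrictAway {f} X a = X a :=
    fun X a ha => by simp [restrictAway, ha]
  have hV := vectors_elim M
  have rs : supp (restrictAway {f} X) ⊆ supp X := by
    intro a ha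
    by_cases haf : a = f
    · subst haf; exact absurd (r0 X) ha
    · have ha' : restrictAway {f} X a ≠ 0 := ha
      rw [r1 _ _ haf] at ha'
      exact ha'
  obtain ⟨W, ⟨Y, hY, rfl⟩, hW1, hW2, hW3⟩ := exists_minimal_conformal (restrict_vecFam hV f) h _
    (restrictAway {f} X) rfl ⟨X, hX, rfl⟩ ((M.ground_finite.subset hX.1).subset rs)
    (by rw [r1 _ _ hhf]; exact hXh)
  rw [r1 _ _ hhf, r1 _ _ hhf] at hW1
  have hYh : Y h ≠ 0 := by rw [hW1]; exact hXh
  -- The restricted vector of minimal support is already the restriction of a circuit.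
  obtain ⟨C, hC, hC1, hC2, hC3⟩ := exists_minimal_conformal hV h _ Y rfl hY
    (M.ground_finite.subset hY.1) hYh
  have hCc : M.IsCircuit C := by
    refine ⟨hC, fun h0 => hYh ?_, fun Y' hY' => hC3 Y' hY'⟩
    rw [← hC1, h0]; rfl
  have hrC0 : restrictAway {f} C ≠ 0 := by
    intro h0
    have := congrFun h0 h
    rw [r1 _ _ hhf, hC1] at this
    exact hYh this
  have hconf : ∀ a, restrictAway {f} C a = restrictAway {f} Y a ∨ restrictAway {f} C a = 0 := by
    intro a
    by_cases haf : a = f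
    · subst haf; exact Or.inr (r0 C)
    · rw [r1 _ _ haf, r1 _ _ haf]; exact hC2 a
  have hsub : supp (restrictAway {f} C) ⊆ supp (restrictAway {f} Y) := by
    intro a ha hYa
    rcases hconf a with h | h
    · exact ha (h.trans hYa)
    · exact ha h
  have hsupp := hW3 _ ⟨C, hC, rfl⟩ hrC0 hsub
  have heq : restrictAway {f} Y = restrictAway {f} C := by
    funext a
    by_cases ha : restrictAway {f} C a = 0
    · rw [ha]
      by_contra h
      have hm : a ∈ supp (restrictAway {f} C) := by rw [hsupp]; exact h
      exact hm ha
    · exact ((hconf a).resolve_right ha).symm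
  refine ⟨restrictAway {f} Y, (hN.2 _).2 ⟨?_, ⟨C, hCc, heq⟩, ?_⟩, ?_, r0 Y, fun a => ?_⟩
  · rw [heq]; exact hrC0
  · rintro Z hZ0 ⟨D, hD, rfl⟩ hZs
    exact hW3 _ ⟨D, hD.1, rfl⟩ hZ0 hZs
  · rw [r1 _ _ hhf, hW1]
  · by_cases haf : a = f
    · subst haf; exact Or.inr (r0 Y)
    · rw [← r1 X a haf]; exact hW2 a

/-- A vector that is `+` at `h`, and away from `f` is `-` nowhere and `+` only on `vt ∪ {h}`,
is incompatible with the cocircuit `Z`. -/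
lemma no_vector {α : Type*} {M N : OrientedMatroid α} {f h : α} (hN : IsContraction M {f} N)
    (hhf : h ≠ f) (vt : Set α) (Z : SignVec α) (hZ : N.IsCocircuit Z) (hZh : Z h = 1)
    (hZvt : ∀ e ∈ vt, Z e = 1 ∨ Z e = 0) (X : SignVec α) (hX : M.IsVector X) (hXh : X h = 1)
    (hpos : ∀ a, a ≠ f → X a = 1 → a ∈ vt ∨ a = h) (hneg : ∀ a, X a = -1 → a = f) : False := by
  obtain ⟨W, hW, hWh, hWf, hWc⟩ :=
    exists_contraction_circuit hN X hX h hhf (by rw [hXh]; decide)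
  obtain ⟨a, ha⟩ := ((orth_iff W Z).1 (hW.1.2 Z hZ.1)).1 ⟨h, by rw [hWh, hXh, hZh]; rfl⟩
  have haf : a ≠ f := by
    rintro rfl
    rw [hWf, zero_mul] at ha
    exact absurd ha (by decide)
  have hWX : W a = X a := by
    rcases hWc a with h | h
    · exact h
    · rw [h, zero_mul] at ha
      exact absurd ha (by decide)
  rw [hWX] at ha
  have tri : ∀ x : SignType, x = 1 ∨ x = -1 ∨ x = 0 := by decide
  rcases tri (X a) with h1 | h1 | h1
  · have hZa : Z a = 1 ∨ Z a = 0 := by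
      rcases hpos a haf h1 with h | rfl
      · exact hZvt a h
      · exact Or.inl hZh
    rcases hZa with h | h <;> rw [h1, h] at ha <;> exact absurd ha (by decide)
  · exact haf (hneg a h1)
  · rw [h1, zero_mul] at ha
    exact absurd ha (by decide)

/-- Let `M` be an oriented matroid program of rank `r` on
`[n] ∪ {f, g}` (`f = n`, `g = n + 1`, `Mf = M ∖ f`), let `Mhat` be an
extension of `M / g` by the element `h = n + 2` in general position, let
`Mhatf = Mhat / f`, and let `vt` be a node of `K_f` that is neither the
source nor the sink.  If there is a cocircuit `Z` of `Mhat / f` with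
`Z h = +` and `Z e ∈ {+, 0}` for all `e ∈ vt`, then `vt` is a vertex of
neither `K_{[f,-h]}` nor `K_{[-h,-f]}`; consequently, any monotone path in
`K_f` from the source to the sink all of whose vertices lie in
`K_{[f,-h]} ∪ K_{[-h,-f]}` (such as the one built from `Mhat` by
concatenation through the sink of `K_h`) does not pass through `vt`. -/
theorem avoid_node_of_cocircuit (M Mf Mg Mhat Mhatf : OrientedMatroid ℕ)
    (n r : ℕ) (src snk vt : Set ℕ)
    (hProg : IsProgram M Mf n r)
    (hMg : IsContraction M {n + 1} Mg)
    (hExt : IsExtension Mg (n + 2) Mhat)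
    (hGP : GenPos Mhat (n + 2))
    (hMhatf : IsContraction Mhat {n} Mhatf)
    (hsrc : IsSource M Mf n r src)
    (hsnk : IsSink M Mf n r snk)
    (hvt : IsNode Mf n vt) (hvt1 : vt ≠ src) (hvt2 : vt ≠ snk)
    (Z : SignVec ℕ) (hZ : Mhatf.IsCocircuit Z) (hZh : Z (n + 2) = 1)
    (hZvt : ∀ e ∈ vt, Z e = 1 ∨ Z e = 0) :
    (¬ InKfmh Mhat n vt ∧ ¬ InKmhmf Mhat n vt) ∧
      ∀ p : List (Set ℕ), IsDipath (Arc M Mf n r) p src snk →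
        (∀ x ∈ p, InKfmh Mhat n x ∨ InKmhmf Mhat n x) → vt ∉ p := by
  have hhf : n + 2 ≠ n := by omega
  have hA : ¬ InKfmh Mhat n vt := by
    rintro ⟨X, hX, hp, hm⟩
    refine no_vector hMhatf hhf vt Z hZ hZh hZvt X hX (hp.ge (Or.inr rfl))
      (fun a _ ha => hp.le ha) (fun a ha => hm.le ha)
  have hB : ¬ InKmhmf Mhat n vt := by
    rintro ⟨X, hX, hp, hm⟩
    refine no_vector hMhatf hhf vt Z hZ hZh hZvt X hX (hp.ge (Or.inr (Or.inr rfl)))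
      (fun a haf ha => ?_) (fun a ha => (hm.le ha).elim)
    rcases hp.le ha with h | h | h
    · exact Or.inl h
    · exact absurd h haf
    · exact Or.inr h
  exact ⟨⟨hA, hB⟩, fun p _ hp hmem => (hp vt hmem).elim hA hB⟩

end OMHK
end

section
/- Let M be an oriented matroid program of rank r on [n] ∪ {f,g}, and let 𝑀̃ be an oriented matroid on [n] ∪ {h} that is an extension of M/{f,g} by an element h in general position. Then there exists an extension M̂ of M/g by an element h in general position (an oriented matroid on [n] ∪ {f,h} with M̂∖h = M/g) such that M̂/f = 𝑀̃. -/
/-! The contractions and the deletion in the hypotheses are prescribed by their circuits.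
Orthogonality duality (a Farkas lemma proved by induction on the ground set, together with the
lifting of vectors along contractions and conformal decomposition of vectors into circuits) shows
that an oriented matroid is determined by its circuits, and that contraction and deletion have
their usual description on covectors: the covectors of `N / f` are the covectors of `N` vanishing
at `f`, and those of `N ∖ h` are the restrictions of the covectors of `N`. The problem becomes:
given `N = M / g` and an extension `T` of `N / f` by `h`, find an extension of `N` by `h` that
contracts to `T`.

In the realizable case one takes `h = f + ε h'`, where `h'` is a representative of the extending
element of `T` and `ε` is infinitesimal. Reading off signs suggests the covectors `liftCov N T f
h`. Those vanishing at `f` are the covectors of `T`. Those with `X f ≠ 0` restrict to covectors of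
`N` and have `X h = X f`, unless a covector `y` of `T` with `y h = -X f` agrees with `X` on its
support off `h`; in that case `X` may take every value at `h`. The covector axioms hold for this
set; the main point is elimination (`LiftData.elim_mem`), where each undesired sign at `h`
provides such a witness `y`, and composing the witnesses with a covector of `N` obtained by
elimination produces any prescribed sign at `h`.

Rank and general position are read off from covectors as well. Deleting `h` preserves the rank if
and only if no covector has support `{h}` (`rank_del_iff`), and then `h` is in general position if
and only if every covector restricting to a cocircuit of the deletion is nonzero at `h`
(`genPos_iff`). Both properties pass from `T` to the lift: a covector of the lift that vanishes at
`h` and restricts to a cocircuit of `N` either vanishes at `f`, hence restricts to a cocircuit of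
`N / f` and contradicts the general position of `T`, or has a witness `y`, whose support off `h`
is nonempty, lies in that of the cocircuit, and misses `f`. -/

open Set

namespace OMHK

open OrientedMatroid

/-! ### Sign vectors and orthogonality -/

section Signs

variable {α : Type*}

lemma mul_eq_neg_one {a b : SignType} : a * b = -1 ↔ a = -b ∧ a ≠ 0 := by
  revert a b; decide

lemma mul_eq_one {a b : SignType} : a * b = 1 ↔ a = b ∧ a ≠ 0 := by
  revert a b; decide

/-- Orthogonality in terms of coordinatewise products: a product `+` occurs if and only if a
product `-` occurs. -/
lemma orth_iff_s7 {X Y : SignVec α} :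
    Orth X Y ↔ ((∃ i, X i * Y i = 1) ↔ ∃ i, X i * Y i = -1) := by
  have h1 : sep X Y = ∅ ↔ ¬ ∃ i, X i * Y i = -1 := by
    simp only [Set.eq_empty_iff_forall_notMem, mul_eq_neg_one, sep, Set.mem_ofPred_eq, not_exists]
  have h2 : sep X (-Y) = ∅ ↔ ¬ ∃ i, X i * Y i = 1 := by
    simp only [Set.eq_empty_iff_forall_notMem, mul_eq_one, sep, Set.mem_ofPred_eq, not_exists,
      Pi.neg_apply, neg_neg]
  unfold Orth
  rw [ne_eq, ne_eq, h1, h2]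
  tauto

lemma orth_neg_left {X Y : SignVec α} : Orth (-X) Y ↔ Orth X Y := by
  have h (a b : SignType) : ((-a) * b = 1 ↔ a * b = -1) ∧ ((-a) * b = -1 ↔ a * b = 1) := by
    revert a b; decide
  simp only [orth_iff_s7, Pi.neg_apply, h]
  tauto

lemma orth_congr {X X' Y Y' : SignVec α} (h : ∀ i, X i * Y i = X' i * Y' i) :
    Orth X Y ↔ Orth X' Y' := by
  simp only [orth_iff_s7, h]

/-- A failure of orthogonality can be normalised, by negating `Y` if necessary, so that all
products are nonnegative and some product is positive. -/
lemma exists_of_not_orth {X Y : SignVec α} (h : ¬ Orth X Y) :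
    ∃ Y', (Y' = Y ∨ Y' = -Y) ∧ (∀ i, X i * Y' i ≠ -1) ∧ ∃ i, X i * Y' i = 1 := by
  have hs (a b : SignType) : (a * (-b) = 1 ↔ a * b = -1) ∧ (a * (-b) = -1 ↔ a * b = 1) := by
    revert a b; decide
  rw [orth_iff_s7] at h
  by_cases h1 : ∃ i, X i * Y i = 1
  · exact ⟨Y, Or.inl rfl, fun i hi => h ⟨fun _ => ⟨i, hi⟩, fun _ => h1⟩, h1⟩
  · by_cases h2 : ∃ i, X i * Y i = -1
    · refine ⟨-Y, Or.inr rfl, ?_, ?_⟩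
      · simp only [Pi.neg_apply, ne_eq, hs]
        exact fun i hi => h1 ⟨i, hi⟩
      · simpa only [Pi.neg_apply, hs] using h2
    · exact absurd ⟨fun h' => absurd h' h1, fun h' => absurd h' h2⟩ h

lemma not_orth_of {X Y : SignVec α} (h : ∀ i, X i * Y i ≠ -1) {i : α} (hi : X i * Y i = 1) :
    ¬ Orth X Y := by
  rw [orth_iff_s7]
  intro h'
  obtain ⟨j, hj⟩ := h'.1 ⟨i, hi⟩
  exact h j hj

lemma compose_of_ne {X Y : SignVec α} {i : α} (h : X i ≠ 0) : compose X Y i = X i := by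
  simp [compose, h]

lemma compose_of_eq {X Y : SignVec α} {i : α} (h : X i = 0) : compose X Y i = Y i := by
  simp [compose, h]

/-- Outside the separation set the composition is commutative. -/
lemma compose_comm_of {X Y : SignVec α} {i : α} (h : i ∉ sep X Y) :
    compose X Y i = compose Y X i := by
  have hs (a b : SignType) (h : ¬ (a = -b ∧ a ≠ 0)) :
      (if a ≠ 0 then a else b) = (if b ≠ 0 then b else a) := by
    revert a b; decide
  exact hs _ _ h

lemma sep_comm (X Y : SignVec α) : sep X Y = sep Y X := by
  have hs (a b : SignType) : (a = -b ∧ a ≠ 0) ↔ (b = -a ∧ b ≠ 0) := by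
    revert a b; decide
  ext i
  exact hs _ _

lemma res_of_mem {A : Set α} {X : SignVec α} {i : α} (h : i ∈ A) : restrictAway A X i = 0 := by
  simp [restrictAway, h]

lemma res_of_notMem {A : Set α} {X : SignVec α} {i : α} (h : i ∉ A) :
    restrictAway A X i = X i := by
  simp [restrictAway, h]

lemma res_eq_self {A : Set α} {X : SignVec α} (h : ∀ a ∈ A, X a = 0) : restrictAway A X = X := by
  ext1 i
  by_cases hi : i ∈ A
  · rw [res_of_mem hi, h i hi]
  · rw [res_of_notMem hi]

lemma res_ne_zero {A : Set α} {X : SignVec α} {i : α} (h : restrictAway A X i ≠ 0) :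
    i ∉ A ∧ X i ≠ 0 := by
  by_cases hi : i ∈ A
  · exact absurd (res_of_mem hi) h
  · exact ⟨hi, by rwa [res_of_notMem hi] at h⟩

lemma res_sep {A : Set α} {X Y : SignVec α} {i : α} :
    i ∈ sep (restrictAway A X) (restrictAway A Y) ↔ i ∉ A ∧ i ∈ sep X Y := by
  by_cases hi : i ∈ A
  · simp [sep, res_of_mem hi, hi]
  · simp [sep, res_of_notMem hi, hi]

lemma res_compose {A : Set α} {X Y : SignVec α} :
    compose (restrictAway A X) (restrictAway A Y) = restrictAway A (compose X Y) := by
  ext1 i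
  by_cases hi : i ∈ A
  · simp [compose, res_of_mem hi]
  · simp [compose, res_of_notMem hi]

lemma res_neg {A : Set α} {X : SignVec α} : restrictAway A (-X) = -restrictAway A X := by
  ext1 i
  by_cases hi : i ∈ A
  · simp [res_of_mem hi]
  · simp [res_of_notMem hi]

lemma compose_mul_orth {X X' Y : SignVec α} (h : Orth X Y) (h' : Orth X' Y) :
    Orth (compose X X') Y := by
  rw [orth_iff_s7] at *
  by_cases hX : ∃ i, X i * Y i = 1
  · obtain ⟨j, hj⟩ := h.1 hX
    obtain ⟨i, hi⟩ := hX
    have hi0 : X i ≠ 0 := fun h0 => by rw [h0, zero_mul] at hi; exact absurd hi (by decide)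
    have hj0 : X j ≠ 0 := fun h0 => by rw [h0, zero_mul] at hj; exact absurd hj (by decide)
    exact ⟨fun _ => ⟨j, by rw [compose_of_ne hj0, hj]⟩,
      fun _ => ⟨i, by rw [compose_of_ne hi0, hi]⟩⟩
  · have hX' : ¬ ∃ i, X i * Y i = -1 := fun h0 => hX (h.2 h0)
    have key : ∀ i, compose X X' i * Y i = X' i * Y i := by
      intro i
      have hs (a b c : SignType) (h1 : ¬ a * b = 1) (h2 : ¬ a * b = -1) :
          (if a ≠ 0 then a else c) * b = c * b := by
        revert a b c; decide
      exact hs _ _ _ (fun h1 => hX ⟨i, h1⟩) (fun h1 => hX' ⟨i, h1⟩)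
    simpa only [key] using h'

end Signs

namespace OrientedMatroid

/-! ### Minors and lifting of vectors -/

section Minors

variable {α : Type*} {M : OrientedMatroid α}

lemma ext_cov {M M' : OrientedMatroid α} (hg : M.ground = M'.ground)
    (hc : ∀ X, X ∈ M.covectors ↔ X ∈ M'.covectors) : M = M' := by
  have hc' : M.covectors = M'.covectors := Set.ext hc
  cases M; cases M'
  simp only at hg hc'
  subst hg hc'
  rfl

/-- The contraction `M / A`: its covectors are the covectors of `M` vanishing on `A`. -/
def con (M : OrientedMatroid α) (A : Set α) : OrientedMatroid α where
  ground := M.ground \ A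
  ground_finite := M.ground_finite.subset Set.sdiff_subset
  covectors := {X | X ∈ M.covectors ∧ ∀ a ∈ A, X a = 0}
  supp_subset := fun X hX i hi => ⟨M.supp_subset X hX.1 hi, fun hA => hi (hX.2 i hA)⟩
  zero_mem := ⟨M.zero_mem, fun _ _ => rfl⟩
  neg_mem := fun X hX => ⟨M.neg_mem X hX.1, fun a ha => by simp [hX.2 a ha]⟩
  compose_mem := fun X hX Y hY =>
    ⟨M.compose_mem X hX.1 Y hY.1, fun a ha => by simp [compose, hX.2 a ha, hY.2 a ha]⟩
  elim := fun X hX Y hY e he => by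
    obtain ⟨Z, hZ, hZe, hZo⟩ := M.elim X hX.1 Y hY.1 e he
    refine ⟨Z, ⟨hZ, fun a ha => ?_⟩, hZe, hZo⟩
    rw [hZo a (fun hs => hs.2 (hX.2 a ha))]
    simp [compose, hX.2 a ha, hY.2 a ha]

/-- The deletion `M ∖ A`: its covectors are the restrictions of the covectors of `M` to the
complement of `A`, extended by zero on `A`. -/
noncomputable def del (M : OrientedMatroid α) (A : Set α) : OrientedMatroid α where
  ground := M.ground \ A
  ground_finite := M.ground_finite.subset Set.sdiff_subset
  covectors := {X | ∃ Y ∈ M.covectors, X = restrictAway A Y}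
  supp_subset := by
    rintro X ⟨Y, hY, rfl⟩ i hi
    exact ⟨M.supp_subset Y hY (res_ne_zero hi).2, (res_ne_zero hi).1⟩
  zero_mem := ⟨0, M.zero_mem, (res_eq_self (fun _ _ => rfl)).symm⟩
  neg_mem := by
    rintro X ⟨Y, hY, rfl⟩
    exact ⟨-Y, M.neg_mem Y hY, res_neg.symm⟩
  compose_mem := by
    rintro X ⟨X', hX, rfl⟩ Y ⟨Y', hY, rfl⟩
    exact ⟨_, M.compose_mem X' hX Y' hY, res_compose⟩
  elim := by
    rintro X ⟨X', hX, rfl⟩ Y ⟨Y', hY, rfl⟩ e he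
    rw [res_sep] at he
    obtain ⟨Z, hZ, hZe, hZo⟩ := M.elim X' hX Y' hY e he.2
    refine ⟨_, ⟨Z, hZ, rfl⟩, ?_, fun i hi => ?_⟩
    · rw [res_of_notMem he.1, hZe]
    · rw [res_compose]
      by_cases hA : i ∈ A
      · rw [res_of_mem hA, res_of_mem hA]
      · rw [res_of_notMem hA, res_of_notMem hA]
        exact hZo i (fun hs => hi (res_sep.2 ⟨hA, hs⟩))

lemma IsVector.neg {X : SignVec α} (h : M.IsVector X) : M.IsVector (-X) :=
  ⟨fun i hi => h.1 (by simpa [supp] using hi), fun Y hY => orth_neg_left.2 (h.2 Y hY)⟩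

/-- If two covectors of opposite sign at `e` both have nonnegative products with `X` off `e`, and
one of them has a positive product, then eliminating `e` gives a covector vanishing at `e` and not
orthogonal to `X`. -/
lemma elim_false {X P Q : SignVec α} {e : α} (hP : P ∈ M.covectors) (hQ : Q ∈ M.covectors)
    (hX : ∀ Y ∈ M.covectors, Y e = 0 → Orth X Y) (he : e ∈ sep P Q)
    (hPn : ∀ i, i ≠ e → X i * P i ≠ -1) (hQn : ∀ i, i ≠ e → X i * Q i ≠ -1)
    {j : α} (hje : j ≠ e) (hj : X j * P j = 1) : False := by
  obtain ⟨Z, hZ, hZe, hZo⟩ := M.elim P hP Q hQ e he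
  have hs (x p q z : SignType) (h1 : x * p ≠ -1) (h2 : x * q ≠ -1)
      (h3 : ¬ (p = -q ∧ p ≠ 0) → z = if p ≠ 0 then p else q) :
      x * z ≠ -1 ∧ (x * p = 1 → x * z = 1) := by
    revert x p q z; decide
  have key : ∀ i, i ≠ e → X i * Z i ≠ -1 ∧ (X i * P i = 1 → X i * Z i = 1) := fun i hi =>
    hs _ _ _ _ (hPn i hi) (hQn i hi) (fun h => hZo i h)
  refine not_orth_of (fun i => ?_) ((key j hje).2 hj) (hX Z hZ hZe)
  by_cases hi : i = e
  · rw [hi, hZe, mul_zero]; decide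
  · exact (key i hi).1

/-- Vectors of the contraction by one element lift to vectors of `M`. -/
lemma lift_vector_one {X : SignVec α} {e : α} (hXs : supp X ⊆ M.ground)
    (hX : ∀ Y ∈ M.covectors, Y e = 0 → Orth X Y) :
    ∃ V, M.IsVector V ∧ ∀ i, i ≠ e → V i = X i := by
  classical
  by_cases he : e ∈ M.ground
  swap
  · refine ⟨X, ⟨hXs, fun Y hY => hX Y hY ?_⟩, fun _ _ => rfl⟩
    by_contra h0
    exact he (M.supp_subset Y hY h0)
  by_contra hcon
  push Not at hcon
  -- For each value at `e` there is an obstruction to being a vector, normalised in sign.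
  have hobs : ∀ s : SignType, ∃ Y ∈ M.covectors,
      (∀ i, Function.update X e s i * Y i ≠ -1) ∧ ∃ i, Function.update X e s i * Y i = 1 := by
    intro s
    by_contra hno
    have hv : M.IsVector (Function.update X e s) := by
      refine ⟨fun i hi => ?_, fun Y hY => ?_⟩
      · by_cases hie : i = e
        · rw [hie]; exact he
        · exact hXs (by simpa [supp, Function.update_of_ne hie] using hi)
      · by_contra hY'
        obtain ⟨Y', hor, h1, h2⟩ := exists_of_not_orth hY'
        refine hno ⟨Y', ?_, h1, h2⟩
        rcases hor with rfl | rfl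
        · exact hY
        · exact M.neg_mem _ hY
    obtain ⟨i, hi, hne⟩ := hcon _ hv
    exact hne (Function.update_of_ne hi _ _)
  have hoff : ∀ {s : SignType} {Y : SignVec α}, (∀ i, Function.update X e s i * Y i ≠ -1) →
      ∀ i, i ≠ e → X i * Y i ≠ -1 := by
    intro s Y h i hi
    have := h i
    rwa [Function.update_of_ne hi] at this
  have hne0 : ∀ {s : SignType} {Y : SignVec α}, Y ∈ M.covectors →
      (∀ i, Function.update X e s i * Y i ≠ -1) → (∃ i, Function.update X e s i * Y i = 1) →
      Y e ≠ 0 := by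
    intro s Y hY h1 h2 h0
    refine absurd (hX Y hY h0) ?_
    rw [orth_congr (X' := Function.update X e s) (Y' := Y)]
    · exact not_orth_of h1 h2.choose_spec
    · intro i
      by_cases hi : i = e
      · rw [hi, h0, mul_zero, mul_zero]
      · rw [Function.update_of_ne hi]
  obtain ⟨P, hP, hP1, hP2⟩ := hobs 0
  obtain ⟨Q, hQ, hQ1, hQ2⟩ := hobs 1
  obtain ⟨R, hR, hR1, hR2⟩ := hobs (-1)
  have hPe := hne0 hP hP1 hP2
  have hQe := hne0 hQ hQ1 hQ2
  have hRe := hne0 hR hR1 hR2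
  obtain ⟨j, hj⟩ := hP2
  have hje : j ≠ e := by
    rintro rfl
    rw [Function.update_self, zero_mul] at hj
    exact absurd hj (by decide)
  rw [Function.update_of_ne hje] at hj
  have hQe1 := hQ1 e
  have hRe1 := hR1 e
  rw [Function.update_self] at hQe1 hRe1
  have hs (p q r : SignType) (h1 : p ≠ 0) (h2 : q ≠ 0) (h3 : r ≠ 0) (h4 : 1 * q ≠ -1)
      (h5 : -1 * r ≠ -1) : (p = -q ∧ p ≠ 0) ∨ (p = -r ∧ p ≠ 0) := by
    revert p q r; decide
  rcases hs _ _ _ hPe hQe hRe hQe1 hRe1 with h | h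
  · exact elim_false hP hQ hX h (hoff hP1) (hoff hQ1) hje hj
  · exact elim_false hP hR hX h (hoff hP1) (hoff hR1) hje hj

/-- Vectors of the contraction `M / A` by a finite set lift to vectors of `M`. -/
lemma lift_vector {A : Set α} (hA : A.Finite) {X : SignVec α} (hXs : supp X ⊆ M.ground)
    (hX : ∀ Y ∈ M.covectors, (∀ a ∈ A, Y a = 0) → Orth X Y) :
    ∃ V, M.IsVector V ∧ ∀ i, i ∉ A → V i = X i := by
  induction A, hA using Set.Finite.induction_on generalizing M X with
  | empty => exact ⟨X, ⟨hXs, fun Y hY => hX Y hY (by simp)⟩, fun _ _ => rfl⟩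
  | @insert a A ha hA ih =>
    obtain ⟨V, hV, hVX⟩ := ih (M := M.con {a}) (X := restrictAway {a} X)
      (fun i hi => ⟨hXs (res_ne_zero hi).2, (res_ne_zero hi).1⟩) (by
        rintro Y ⟨hY, hYa⟩ hYA
        have hYa' : Y a = 0 := hYa a rfl
        rw [orth_congr (X' := X) (Y' := Y)]
        · refine hX Y hY ?_
          rintro b (rfl | hb)
          · exact hYa'
          · exact hYA b hb
        · intro i
          by_cases hi : i = a
          · rw [hi, hYa', mul_zero, mul_zero]
          · rw [res_of_notMem (by simpa using hi)])
    obtain ⟨W, hW, hWV⟩ := lift_vector_one (M := M) (X := V) (e := a)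
      (fun i hi => (hV.1 hi).1) (fun Y hY hYa => hV.2 Y ⟨hY, by simpa using hYa⟩)
    refine ⟨W, hW, fun i hi => ?_⟩
    have hia : i ≠ a := fun h => hi (Or.inl h)
    rw [hWV i hia, hVX i (fun h => hi (Or.inr h)), res_of_notMem (by simpa using hia)]

lemma isVector_con_iff {A : Set α} (hA : A.Finite) {X : SignVec α} :
    (M.con A).IsVector X ↔ ∃ V, M.IsVector V ∧ X = restrictAway A V := by
  constructor
  · intro h
    obtain ⟨V, hV, hVX⟩ := lift_vector (M := M) hA (X := X) (fun i hi => (h.1 hi).1)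
      (fun Y hY hYA => h.2 Y ⟨hY, hYA⟩)
    refine ⟨V, hV, funext fun i => ?_⟩
    by_cases hi : i ∈ A
    · rw [res_of_mem hi]
      by_contra h0
      exact (h.1 h0).2 hi
    · rw [res_of_notMem hi, hVX i hi]
  · rintro ⟨V, hV, rfl⟩
    refine ⟨fun i hi => ⟨hV.1 (res_ne_zero hi).2, (res_ne_zero hi).1⟩, ?_⟩
    rintro Y ⟨hY, hYA⟩
    rw [orth_congr (X' := V) (Y' := Y)]
    · exact hV.2 Y hY
    · intro i
      by_cases hi : i ∈ A
      · rw [hYA i hi, mul_zero, mul_zero]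
      · rw [res_of_notMem hi]

lemma isVector_del_iff {A : Set α} {X : SignVec α} :
    (M.del A).IsVector X ↔ M.IsVector X ∧ ∀ a ∈ A, X a = 0 := by
  have key : ∀ Y, (∀ a ∈ A, X a = 0) → (Orth X (restrictAway A Y) ↔ Orth X Y) := by
    intro Y h0
    refine orth_congr fun i => ?_
    by_cases hi : i ∈ A
    · rw [h0 i hi, zero_mul, zero_mul]
    · rw [res_of_notMem hi]
  constructor
  · intro h
    have h0 : ∀ a ∈ A, X a = 0 := fun a ha => by
      by_contra h0
      exact (h.1 h0).2 ha
    exact ⟨⟨fun i hi => (h.1 hi).1, fun Y hY => (key Y h0).1 (h.2 _ ⟨Y, hY, rfl⟩)⟩, h0⟩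
  · rintro ⟨h, h0⟩
    refine ⟨fun i hi => ⟨h.1 hi, fun hA => hi (h0 i hA)⟩, ?_⟩
    rintro _ ⟨Y, hY, rfl⟩
    exact (key Y h0).2 (h.2 Y hY)

end Minors

/-! ### Vector elimination, conformal circuits and double duality -/

section Duality

variable {α : Type*} {M : OrientedMatroid α}

/-- Elimination for vectors. The required vector lives in the minor obtained by deleting `e` and
contracting the rest of the separation set, where the composition is a vector. -/
lemma vector_elim {X Y : SignVec α} (hX : M.IsVector X) (hY : M.IsVector Y) {e : α}
    (he : e ∈ sep X Y) :
    ∃ Z, M.IsVector Z ∧ Z e = 0 ∧ ∀ i, i ∉ sep X Y → Z i = compose X Y i := by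
  have hsub : sep X Y ⊆ M.ground := fun i hi => hX.1 hi.2
  have hXY : M.IsVector (compose X Y) := by
    refine ⟨fun i hi => ?_, fun W hW => compose_mul_orth (hX.2 W hW) (hY.2 W hW)⟩
    by_cases h0 : X i = 0
    · exact hY.1 (fun h1 => hi (by rw [compose_of_eq h0, h1]))
    · exact hX.1 h0
  obtain ⟨V, hV, hVX⟩ := lift_vector (M := M.del {e}) (A := sep X Y \ {e})
    (X := restrictAway {e} (compose X Y))
    (M.ground_finite.subset (Set.sdiff_subset.trans hsub))
    (fun i hi => ⟨hXY.1 (res_ne_zero hi).2, (res_ne_zero hi).1⟩) (by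
      rintro _ ⟨W, hW, rfl⟩ hWA
      have hW0 : ∀ a, a ∈ sep X Y → a ≠ e → W a = 0 := fun a ha hae => by
        have := hWA a ⟨ha, hae⟩
        rwa [res_of_notMem (by simpa using hae)] at this
      rw [orth_iff_s7]
      by_cases hWe : W e = 0
      · have h := hXY.2 W hW
        rw [orth_iff_s7] at h
        have hp : ∀ i, restrictAway {e} (compose X Y) i * restrictAway {e} W i
            = compose X Y i * W i := by
          intro i
          by_cases hi : i = e
          · rw [hi, hWe, res_of_mem (Set.mem_singleton _), mul_zero, zero_mul]
          · rw [res_of_notMem (by simpa using hi), res_of_notMem (by simpa using hi)]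
        simpa only [hp] using h
      · -- The products of `W` with `X` and with `Y` at `e` are opposite, so each of the two has a
        -- product off `e` of the sign it lacks at `e`.
        have hoX := orth_iff_s7.1 (hX.2 W hW)
        have hoY := orth_iff_s7.1 (hY.2 W hW)
        have hpt : ∀ i, i ≠ e → ∀ s : SignType, s ≠ 0 → (X i * W i = s ∨ Y i * W i = s) →
            restrictAway {e} (compose X Y) i * restrictAway {e} W i = s := by
          intro i hi s hs0 hor
          rw [res_of_notMem (by simpa using hi), res_of_notMem (by simpa using hi)]
          have hs (x y w s : SignType) (h0 : s ≠ 0) (h : x * w = s ∨ y * w = s)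
              (hw : x = -y ∧ x ≠ 0 → w = 0) : (if x ≠ 0 then x else y) * w = s := by
            revert x y w s; decide
          exact hs _ _ _ _ hs0 hor (fun h => hW0 i h hi)
        have hs (x y w : SignType) (h : x = -y) (h0 : x ≠ 0) (hw : w ≠ 0) :
            (x * w = 1 ∧ y * w = -1) ∨ (x * w = -1 ∧ y * w = 1) := by
          revert x y w; decide
        have hne : ∀ {s t : SignType} {i : α} {Z : SignVec α}, Z i * W i = s → Z e * W e = t →
            s ≠ t → i ≠ e := by
          rintro s t i Z h1 h2 h3 rfl
          exact h3 (h1.symm.trans h2)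
        rcases hs _ _ _ he.1 he.2 hWe with ⟨h1, h2⟩ | ⟨h1, h2⟩
        · obtain ⟨i, hi⟩ := hoX.1 ⟨e, h1⟩
          obtain ⟨j, hj⟩ := hoY.2 ⟨e, h2⟩
          exact ⟨fun _ => ⟨i, hpt i (hne hi h1 (by decide)) _ (by decide) (Or.inl hi)⟩,
            fun _ => ⟨j, hpt j (hne hj h2 (by decide)) _ (by decide) (Or.inr hj)⟩⟩
        · obtain ⟨i, hi⟩ := hoX.2 ⟨e, h1⟩
          obtain ⟨j, hj⟩ := hoY.1 ⟨e, h2⟩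
          exact ⟨fun _ => ⟨j, hpt j (hne hj h2 (by decide)) _ (by decide) (Or.inr hj)⟩,
            fun _ => ⟨i, hpt i (hne hi h1 (by decide)) _ (by decide) (Or.inl hi)⟩⟩)
  rw [isVector_del_iff] at hV
  refine ⟨V, hV.1, hV.2 e rfl, fun i hi => ?_⟩
  have hie : i ≠ e := fun h => hi (h ▸ he)
  rw [hVX i (fun h => hi h.1), res_of_notMem (by simpa using hie)]

/-- If `W` has support inside that of `V` and conflicts with `V` somewhere, but not at `e`, then
repeated elimination gives a vector conformal to `V`, agreeing with it at `e`, of strictly smaller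
support. -/
lemma exists_conformal_smaller {V : SignVec α} (hV : M.IsVector V) {e : α}
    (k : ℕ) {W : SignVec α} (hW : M.IsVector W) (hWV : supp W ⊆ supp V) (hk : (sep V W).ncard = k)
    (hne : (sep V W).Nonempty) (hes : e ∉ sep V W) :
    ∃ Z, M.IsVector Z ∧ Z e = V e ∧ (∀ i, Z i ≠ 0 → Z i = V i) ∧ supp Z ≠ supp V := by
  induction k using Nat.strong_induction_on generalizing W with
  | _ k ih =>
    obtain ⟨f, hf⟩ := hne
    obtain ⟨Z, hZ, hZf, hZo⟩ := vector_elim hV hW hf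
    have hfin : (sep V W).Finite := M.ground_finite.subset fun i hi => hV.1 hi.2
    have hoff : ∀ i, i ∉ sep V W → Z i = V i := by
      intro i hi
      rw [hZo i hi]
      by_cases h0 : V i = 0
      · rw [compose_of_eq h0, h0]
        by_contra h1
        exact hWV h1 h0
      · exact compose_of_ne h0
    have hsub : sep V Z ⊆ sep V W := by
      intro i hi
      by_contra h1
      have := hi.1
      rw [hoff i h1] at this
      have hs (a : SignType) (h : a = -a) : a = 0 := by revert a; decide
      exact hi.2 (hs _ this)
    have hfZ : f ∉ sep V Z := fun h => by
      have := h.1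
      rw [hZf, neg_zero] at this
      exact h.2 this
    have hlt : (sep V Z).ncard < k := by
      rw [← hk]
      exact Set.ncard_lt_ncard ⟨hsub, fun h => hfZ (h hf)⟩ hfin
    have hZV : supp Z ⊆ supp V := by
      intro i hi h0
      refine hi ?_
      rw [hoff i (fun h => h.2 h0), h0]
    rcases (sep V Z).eq_empty_or_nonempty with hemp | hne'
    · refine ⟨Z, hZ, hoff e hes, fun i hi => ?_, fun h => ?_⟩
      · have h1 : i ∉ sep V Z := by rw [hemp]; exact Set.notMem_empty i
        have hs (v z : SignType) (h1 : ¬ (v = -z ∧ v ≠ 0)) (hz : z ≠ 0) (hv : v ≠ 0) : z = v := by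
          revert v z; decide
        exact hs _ _ h1 hi (hZV hi)
      · have : f ∈ supp Z := h ▸ hf.2
        exact this hZf
    · exact ih _ hlt hZ hZV rfl hne' (fun h => hes (hsub h))

/-- Conformal decomposition: each element of the support of a vector lies in a circuit
conformal to that vector. -/
lemma exists_conformal_circuit {V : SignVec α} (hV : M.IsVector V) {e : α} (he : V e ≠ 0) :
    ∃ C, M.IsCircuit C ∧ C e = V e ∧ ∀ i, C i ≠ 0 → C i = V i := by
  generalize hk : (supp V).ncard = k
  induction k using Nat.strong_induction_on generalizing V with
  | _ k ih =>
    by_cases hc : M.IsCircuit V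
    · exact ⟨V, hc, rfl, fun _ _ => rfl⟩
    have hV0 : V ≠ 0 := fun h => he (by rw [h]; rfl)
    have : ∃ W, M.IsVector W ∧ W ≠ 0 ∧ supp W ⊆ supp V ∧ supp W ≠ supp V := by
      by_contra hcon
      refine hc ⟨hV, hV0, fun Y hY hY0 hYV => ?_⟩
      by_contra h
      exact hcon ⟨Y, hY, hY0, hYV, h⟩
    obtain ⟨W, hW, hW0, hWV, hWne⟩ := this
    have hZ : ∃ Z, M.IsVector Z ∧ Z e = V e ∧ (∀ i, Z i ≠ 0 → Z i = V i) ∧ supp Z ≠ supp V := by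
      have hsw : supp (-W) = supp W := by ext i; simp [supp]
      -- Choose the sign of `W` so that it does not conflict with `V` at `e`, and so that it
      -- conflicts with `V` elsewhere when `W e = 0`.
      have main : ∀ U : SignVec α, M.IsVector U → U ≠ 0 → supp U ⊆ supp V → supp U ≠ supp V →
          e ∉ sep V U → (U e = 0 → (sep V U).Nonempty) →
          ∃ Z, M.IsVector Z ∧ Z e = V e ∧ (∀ i, Z i ≠ 0 → Z i = V i) ∧ supp Z ≠ supp V := by
        intro U hU hU0 hUV hUne heU hU'
        rcases (sep V U).eq_empty_or_nonempty with hemp | hne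
        · have hs (v z : SignType) (h1 : ¬ (v = -z ∧ v ≠ 0)) (hz : z ≠ 0) (hv : v ≠ 0) :
              z = v := by
            revert v z; decide
          have hconf : ∀ i, U i ≠ 0 → U i = V i := fun i hi =>
            hs _ _ (fun h => by have : i ∈ sep V U := h
                                rw [hemp] at this; exact this) hi (hUV hi)
          have hUe : U e ≠ 0 := fun h0 => by
            have := hU' h0
            rw [hemp] at this
            exact Set.not_nonempty_empty this
          exact ⟨U, hU, hconf e hUe, hconf, hUne⟩
        · exact exists_conformal_smaller hV _ hU hUV rfl hne heU
      have hs (a b : SignType) (h : a ≠ 0) (hb : b ≠ 0) : (a = -b ∧ a ≠ 0) ∨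
          (a = - -b ∧ a ≠ 0) := by revert a b; decide
      have hW0' : -W ≠ 0 := fun h => hW0 (funext fun i => by simpa using congrFun h i)
      by_cases hWe : W e = 0
      · obtain ⟨i, hi⟩ : ∃ i, W i ≠ 0 := by
          by_contra h
          push Not at h
          exact hW0 (funext h)
        have hne : ∀ U : SignVec α, U e = 0 → e ∉ sep V U := fun U hU h => by
          have := h.1
          rw [hU, neg_zero] at this
          exact h.2 this
        rcases hs _ _ (hWV hi) hi with h | h
        · exact main W hW hW0 hWV hWne (hne W hWe) (fun _ => ⟨i, h⟩)
        · exact main (-W) hW.neg hW0' (hsw ▸ hWV) (hsw ▸ hWne) (hne _ (by simp [hWe]))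
            (fun _ => ⟨i, h⟩)
      · by_cases hes : e ∈ sep V W
        · refine main (-W) hW.neg hW0' (hsw ▸ hWV) (hsw ▸ hWne) (fun h => ?_)
            (fun h => absurd (by simpa using h) hWe)
          have hs (a b : SignType) (h : a = -b) (h' : a = - -b) : a = 0 := by
            revert a b; decide
          exact he (hs _ _ hes.1 h.1)
        · exact main W hW hW0 hWV hWne hes (fun h => absurd h hWe)
    obtain ⟨Z, hZ, hZe, hZc, hZne⟩ := hZ
    have hZV : supp Z ⊆ supp V := fun i hi => by
      show V i ≠ 0
      rw [← hZc i hi]; exact hi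
    have hlt : (supp Z).ncard < k := by
      rw [← hk]
      exact Set.ncard_lt_ncard (hZV.ssubset_of_ne hZne) (M.ground_finite.subset hV.1)
    obtain ⟨C, hC, hCe, hCc⟩ := ih _ hlt hZ (by rw [hZe]; exact he) rfl
    exact ⟨C, hC, hCe.trans hZe, fun i hi => by
      rw [hCc i hi, hZc i (by rw [← hCc i hi]; exact hi)]⟩

/-- A Farkas lemma: a sign vector with full support is a covector, or some vector has nonnegative
products with it, one of them positive. -/
lemma farkas (k : ℕ) : ∀ (M : OrientedMatroid α) (Y : SignVec α), M.ground.ncard = k →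
    supp Y = M.ground →
    Y ∈ M.covectors ∨ ∃ V, M.IsVector V ∧ (∀ i, V i * Y i ≠ -1) ∧ ∃ i, V i * Y i = 1 := by
  induction k with
  | zero =>
    intro M Y hk hY
    left
    rw [Set.ncard_eq_zero M.ground_finite] at hk
    have : Y = 0 := by
      funext i
      by_contra h
      have : i ∈ supp Y := h
      rw [hY, hk] at this
      exact this
    rw [this]
    exact M.zero_mem
  | succ k ih =>
    intro M Y hk hY
    by_contra hcon
    push Not at hcon
    obtain ⟨hYM, hno⟩ := hcon
    have hcard : ∀ e ∈ M.ground, (M.ground \ {e}).ncard = k := fun e he => by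
      rw [Set.ncard_sdiff_singleton_of_mem he, hk]; rfl
    have hsupp : ∀ e : α, supp (restrictAway {e} Y) = M.ground \ {e} := by
      intro e
      rw [← hY]
      ext i
      by_cases hi : i = e
      · simp [supp, hi, res_of_mem]
      · have : i ∉ ({e} : Set α) := by simpa using hi
        simp [supp, res_of_notMem this, hi]
    have hprod : ∀ {e : α} {V : SignVec α}, V e = 0 → ∀ i,
        V i * restrictAway {e} Y i = V i * Y i := by
      intro e V h0 i
      by_cases hi : i = e
      · rw [hi, h0, zero_mul, zero_mul]
      · rw [res_of_notMem (by simpa using hi)]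
    have step : ∀ e ∈ M.ground, restrictAway {e} Y ∈ M.covectors := by
      intro e he
      have hdel : ∃ Y1 ∈ M.covectors, restrictAway {e} Y = restrictAway {e} Y1 := by
        rcases ih (M.del {e}) (restrictAway {e} Y) (hcard e he) (hsupp e) with h | ⟨V, hV, h1, i, hi⟩
        · exact h
        · rw [isVector_del_iff] at hV
          have h0 := hV.2 e rfl
          simp only [hprod h0] at h1 hi
          exact absurd hi (hno V hV.1 h1 i)
      obtain ⟨Y1, hY1, hYY1⟩ := hdel
      have hoff : ∀ i, i ≠ e → Y i = Y1 i := fun i hi => by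
        have := congrFun hYY1 i
        rwa [res_of_notMem (by simpa using hi), res_of_notMem (by simpa using hi)] at this
      rcases ih (M.con {e}) (restrictAway {e} Y) (hcard e he) (hsupp e) with h | ⟨V', hV', h1, i, hi⟩
      · exact h.1
      · exfalso
        obtain ⟨V, hV, rfl⟩ := (isVector_con_iff (Set.finite_singleton e)).1 hV'
        have hie : i ≠ e := by
          rintro rfl
          rw [res_of_mem (Set.mem_singleton _), zero_mul] at hi
          exact absurd hi (by decide)
        have h1' : ∀ j, j ≠ e → V j * Y j ≠ -1 := fun j hj => by
          have := h1 j
          rwa [res_of_notMem (by simpa using hj), res_of_notMem (by simpa using hj)] at this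
        rw [res_of_notMem (by simpa using hie), res_of_notMem (by simpa using hie)] at hi
        by_cases hVe : V e * Y e = -1
        · have hne : Y1 e ≠ Y e := by
            intro h
            apply hYM
            have : Y = Y1 := by
              funext j
              by_cases hj : j = e
              · rw [hj, h]
              · exact hoff j hj
            rwa [this]
          have hs (v y z : SignType) (h1 : v * y = -1) (h2 : z ≠ y) : v * z ≠ -1 := by
            revert v y z; decide
          refine not_orth_of (X := V) (Y := Y1) (fun j => ?_) (i := i) ?_ (hV.2 Y1 hY1)
          · by_cases hj : j = e
            · rw [hj]; exact hs _ _ _ hVe hne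
            · rw [← hoff j hj]; exact h1' j hj
          · rw [← hoff i hie]; exact hi
        · refine hno V hV (fun j => ?_) i hi
          by_cases hj : j = e
          · rw [hj]; exact hVe
          · exact h1' j hj
    obtain ⟨e, he⟩ : M.ground.Nonempty := by
      rw [Set.nonempty_iff_ne_empty]
      intro h
      rw [h, Set.ncard_empty] at hk
      omega
    by_cases hex : ∃ e' ∈ M.ground, e' ≠ e
    · obtain ⟨e', he', hne⟩ := hex
      apply hYM
      have := M.compose_mem _ (step e he) _ (step e' he')
      convert this using 1
      funext i
      by_cases hi : i = e
      · have h1 : i ∉ ({e'} : Set α) := by rw [hi]; exact fun h => hne h.symm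
        rw [compose_of_eq (by rw [hi]; exact res_of_mem (Set.mem_singleton _)), res_of_notMem h1]
      · have h1 : i ∉ ({e} : Set α) := by simpa using hi
        by_cases h0 : Y i = 0
        · rw [compose_of_eq (by rw [res_of_notMem h1, h0])]
          by_cases h2 : i ∈ ({e'} : Set α)
          · rw [res_of_mem h2, h0]
          · rw [res_of_notMem h2]
        · rw [compose_of_ne (by rwa [res_of_notMem h1]), res_of_notMem h1]
    · -- The ground set is `{e}` and every covector vanishes, so `Y` itself is a vector.
      push Not at hex
      have hsq (a : SignType) : a * a ≠ -1 ∧ (a ≠ 0 → a * a = 1) := by revert a; decide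
      have hYe : Y e ≠ 0 := by
        have : e ∈ supp Y := hY ▸ he
        exact this
      refine hno Y ⟨hY.le, fun Z hZ => ?_⟩ (fun i => (hsq _).1) e ((hsq _).2 hYe)
      have hoff : ∀ (Z : SignVec α), supp Z ⊆ M.ground → ∀ i, i ≠ e → Z i = 0 := by
        intro Z hZ i hi
        by_contra h
        exact hi (hex i (hZ h))
      have hZ0 : ∀ i, Z i = 0 := by
        have hs (a b : SignType) (h : b ≠ 0) : a = 0 ∨ b = a ∨ b = -a := by revert a b; decide
        have hext : ∀ W : SignVec α, W ∈ M.covectors → Y e ≠ W e := by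
          intro W hW h
          apply hYM
          have : Y = W := by
            funext i
            by_cases hi : i = e
            · rw [hi, h]
            · rw [hoff Y hY.le i hi, hoff W (M.supp_subset W hW) i hi]
          rwa [this]
        intro i
        by_cases hi : i = e
        · rw [hi]
          rcases hs (Z e) (Y e) hYe with h | h | h
          · exact h
          · exact absurd h (hext Z hZ)
          · exact absurd h (hext _ (M.neg_mem Z hZ))
        · exact hoff Z (M.supp_subset Z hZ) i hi
      rw [orth_iff_s7]
      simp [hZ0]

/-- Double duality: a sign vector on the ground set orthogonal to all circuits is a covector. -/
lemma mem_covectors_iff {Y : SignVec α} :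
    Y ∈ M.covectors ↔ supp Y ⊆ M.ground ∧ ∀ C, M.IsCircuit C → Orth C Y := by
  refine ⟨fun h => ⟨M.supp_subset Y h, fun C hC => hC.1.2 Y h⟩, fun ⟨hs, h⟩ => ?_⟩
  have hsup : supp Y = (M.con (M.ground \ supp Y)).ground := by
    show supp Y = M.ground \ (M.ground \ supp Y)
    rw [Set.sdiff_sdiff_right_self]
    exact (Set.inter_eq_right.2 hs).symm
  rcases farkas _ (M.con (M.ground \ supp Y)) Y rfl hsup with h' | ⟨V', hV', h1, i, hi⟩
  · exact h'.1
  · exfalso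
    obtain ⟨V, hV, rfl⟩ := (isVector_con_iff (M.ground_finite.subset Set.sdiff_subset)).1 hV'
    have hp : ∀ j, restrictAway (M.ground \ supp Y) V j * Y j = V j * Y j := by
      intro j
      by_cases hj : j ∈ M.ground \ supp Y
      · have : Y j = 0 := by
          by_contra h0
          exact hj.2 h0
        rw [this, mul_zero, mul_zero]
      · rw [res_of_notMem hj]
    simp only [hp] at h1 hi
    have hVi : V i ≠ 0 := fun h0 => by
      rw [h0, zero_mul] at hi
      exact absurd hi (by decide)
    obtain ⟨C, hC, hCi, hCc⟩ := exists_conformal_circuit hV hVi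
    refine not_orth_of (fun j => ?_) (i := i) (by rw [hCi, hi]) (h C hC)
    by_cases hj : C j = 0
    · rw [hj, zero_mul]; decide
    · rw [hCc j hj]; exact h1 j

lemma ext_circuit {M M' : OrientedMatroid α} (hg : M.ground = M'.ground)
    (hc : ∀ X, M.IsCircuit X ↔ M'.IsCircuit X) : M = M' :=
  ext_cov hg fun X => by rw [mem_covectors_iff, mem_covectors_iff, hg]; simp only [hc]

lemma isDeletion_del (M : OrientedMatroid α) (A : Set α) : IsDeletion M A (M.del A) := by
  refine ⟨rfl, fun X => ?_⟩
  simp only [IsCircuit, isVector_del_iff]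
  constructor
  · rintro ⟨⟨hX, hA⟩, h0, hmin⟩
    refine ⟨⟨hX, h0, fun Y hY hY0 hYX => hmin Y ⟨hY, fun a ha => ?_⟩ hY0 hYX⟩, hA⟩
    by_contra h
    exact hYX h (hA a ha)
  · rintro ⟨⟨hX, h0, hmin⟩, hA⟩
    exact ⟨⟨hX, hA⟩, h0, fun Y hY hY0 hYX => hmin Y hY.1 hY0 hYX⟩

lemma exists_ne_zero {X : SignVec α} (h : X ≠ 0) : ∃ i, X i ≠ 0 := by
  by_contra h'
  push Not at h'
  exact h (funext h')

lemma isContraction_con (M : OrientedMatroid α) {A : Set α} (hA : A.Finite) :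
    IsContraction M A (M.con A) := by
  refine ⟨rfl, fun X => ?_⟩
  have hres : ∀ Y, M.IsCircuit Y → (M.con A).IsVector (restrictAway A Y) := fun Y hY =>
    (isVector_con_iff hA).2 ⟨Y, hY.1, rfl⟩
  -- A nonzero vector of the contraction contains conformally a nonzero restricted circuit.
  have hconf : ∀ W, (M.con A).IsVector W → W ≠ 0 → ∃ C, M.IsCircuit C ∧ restrictAway A C ≠ 0 ∧
      ∀ i, restrictAway A C i ≠ 0 → restrictAway A C i = W i := by
    intro W hW hW0
    obtain ⟨V, hV, rfl⟩ := (isVector_con_iff hA).1 hW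
    obtain ⟨i, hi⟩ := exists_ne_zero hW0
    obtain ⟨hiA, hVi⟩ := res_ne_zero hi
    obtain ⟨C, hC, hCi, hCc⟩ := exists_conformal_circuit hV hVi
    refine ⟨C, hC, fun h => ?_, fun j hj => ?_⟩
    · have := congrFun h i
      rw [res_of_notMem hiA, hCi] at this
      exact hVi this
    · obtain ⟨hjA, hCj⟩ := res_ne_zero hj
      rw [res_of_notMem hjA, res_of_notMem hjA, hCc j hCj]
  have hsub : ∀ {W C : SignVec α}, (∀ i, restrictAway A C i ≠ 0 → restrictAway A C i = W i) →
      supp (restrictAway A C) ⊆ supp W := fun h i hi => by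
    show _ ≠ _
    rw [← h i hi]; exact hi
  constructor
  · rintro ⟨hX, hX0, hmin⟩
    obtain ⟨C, hC, hC0, hCc⟩ := hconf X hX hX0
    have heq := hmin _ (hres C hC) hC0 (hsub hCc)
    refine ⟨hX0, ⟨C, hC, ?_⟩, ?_⟩
    · funext i
      by_cases hi : restrictAway A C i = 0
      · rw [hi]
        by_contra h
        have : i ∈ supp (restrictAway A C) := heq ▸ h
        exact this hi
      · exact (hCc i hi).symm
    · rintro Z hZ0 ⟨Y, hY, rfl⟩ hZX
      exact hmin _ (hres Y hY) hZ0 hZX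
  · rintro ⟨hX0, ⟨Y, hY, rfl⟩, hmin⟩
    refine ⟨hres Y hY, hX0, fun W hW hW0 hWX => ?_⟩
    obtain ⟨C, hC, hC0, hCc⟩ := hconf W hW hW0
    have := hmin _ hC0 ⟨C, hC, rfl⟩ ((hsub hCc).trans hWX)
    exact hWX.antisymm (this ▸ hsub hCc)

lemma eq_del {M M' : OrientedMatroid α} {A : Set α} (h : IsDeletion M A M') : M' = M.del A :=
  ext_circuit h.1 fun X => (h.2 X).trans ((isDeletion_del M A).2 X).symm

lemma eq_con {M M' : OrientedMatroid α} {A : Set α} (hA : A.Finite) (h : IsContraction M A M') :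
    M' = M.con A :=
  ext_circuit h.1 fun X => (h.2 X).trans ((isContraction_con M hA).2 X).symm

end Duality

/-! ### Closure, rank and general position -/

section Rank

variable {α : Type*} {M : OrientedMatroid α}

/-- `e` lies in the closure of `A`: every covector vanishing on `A` vanishes at `e`. Elements
outside the ground set lie in every closure. -/
def Cl (M : OrientedMatroid α) (A : Set α) (e : α) : Prop :=
  ∀ Y ∈ M.covectors, (∀ a ∈ A, Y a = 0) → Y e = 0

lemma Cl.mono {A B : Set α} {e : α} (h : M.Cl A e) (hAB : A ⊆ B) : M.Cl B e :=
  fun Y hY h0 => h Y hY fun a ha => h0 a (hAB ha)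

lemma Cl.trans {A B : Set α} {e : α} (h : M.Cl B e) (hAB : ∀ b ∈ B, M.Cl A b) : M.Cl A e :=
  fun Y hY h0 => h Y hY fun b hb => hAB b hb Y hY h0

lemma cl_of_mem {A : Set α} {e : α} (h : e ∈ A) : M.Cl A e := fun _ _ h0 => h0 e h

/-- Two covectors that are nonzero at `e` combine, up to sign, to a covector vanishing at `e` that
agrees with the first one wherever the second one vanishes. -/
lemma elim_zero {X Y : SignVec α} (hX : X ∈ M.covectors) (hY : Y ∈ M.covectors) {e : α}
    (hXe : X e ≠ 0) (hYe : Y e ≠ 0) :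
    ∃ Z ∈ M.covectors, Z e = 0 ∧ ∀ i, Y i = 0 → Z i = X i := by
  have main : ∀ Y ∈ M.covectors, e ∈ sep X Y →
      ∃ Z ∈ M.covectors, Z e = 0 ∧ ∀ i, Y i = 0 → Z i = X i := by
    intro Y hY he
    obtain ⟨Z, hZ, hZe, hZo⟩ := M.elim X hX Y hY e he
    refine ⟨Z, hZ, hZe, fun i hi => ?_⟩
    rw [hZo i (fun h => h.2 (by rw [h.1, hi, neg_zero]))]
    by_cases h0 : X i = 0
    · rw [compose_of_eq h0, hi, h0]
    · rw [compose_of_ne h0]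
  have hs (a b : SignType) (h : a ≠ 0) (hb : b ≠ 0) : (a = -b ∧ a ≠ 0) ∨
      (a = - -b ∧ a ≠ 0) := by revert a b; decide
  rcases hs _ _ hXe hYe with h | h
  · exact main Y hY h
  · obtain ⟨Z, hZ, hZe, hZo⟩ := main (-Y) (M.neg_mem Y hY) h
    exact ⟨Z, hZ, hZe, fun i hi => hZo i (by simp [hi])⟩

/-- The exchange property of the closure operator. -/
lemma Cl.exchange {A : Set α} {e f : α} (h : M.Cl (insert f A) e) (hA : ¬ M.Cl A e) :
    M.Cl (insert e A) f := by
  intro Y hY hYA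
  by_contra hYf
  unfold Cl at hA
  push Not at hA
  obtain ⟨X, hX, hXA, hXe⟩ := hA
  have hXf : X f ≠ 0 := fun h0 => hXe (h X hX (by
    rintro a (rfl | ha)
    · exact h0
    · exact hXA a ha))
  obtain ⟨Z, hZ, hZf, hZo⟩ := elim_zero hX hY hXf hYf
  have hZe : Z e = X e := hZo e (hYA e (Set.mem_insert _ _))
  refine hXe (hZe ▸ h Z hZ ?_)
  rintro a (rfl | ha)
  · exact hZf
  · rw [hZo a (hYA a (Set.mem_insert_of_mem _ ha)), hXA a ha]

/-- An element of the closure of a set not containing it completes a circuit with that set. -/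
lemma Cl.exists_circuit {A : Set α} {e : α} (h : M.Cl A e) (hA : A ⊆ M.ground)
    (he : e ∈ M.ground) (heA : e ∉ A) :
    ∃ C, M.IsCircuit C ∧ C e ≠ 0 ∧ supp C ⊆ insert e A := by
  classical
  obtain ⟨V, hV, hVX⟩ := lift_vector (M := M) (X := Pi.single e 1) (M.ground_finite.subset hA)
    (fun i hi => by
      by_cases hie : i = e
      · rw [hie]; exact he
      · exact absurd (Pi.single_eq_of_ne hie _) hi)
    (fun Y hY hYA => by
      have h0 : ∀ i, (Pi.single e 1 : SignVec α) i * Y i = 0 := by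
        intro i
        by_cases hie : i = e
        · rw [hie, h Y hY hYA, mul_zero]
        · rw [Pi.single_eq_of_ne hie, zero_mul]
      rw [orth_iff_s7]
      simp [h0])
  have hVe : V e ≠ 0 := by
    rw [hVX e heA, Pi.single_eq_same]
    decide
  obtain ⟨C, hC, hCe, hCc⟩ := exists_conformal_circuit hV hVe
  refine ⟨C, hC, by rwa [hCe], fun i hi => ?_⟩
  by_contra hn
  rw [Set.mem_insert_iff, not_or] at hn
  refine hi ?_
  rw [hCc i hi, hVX i hn.2, Pi.single_eq_of_ne hn.1]

/-- A circuit and a covector cannot have supports meeting in exactly one element. -/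
lemma eq_zero_of_circuit {C Y : SignVec α} (hC : M.IsCircuit C) (hY : Y ∈ M.covectors) {e : α}
    (hCe : C e ≠ 0) (h : ∀ i, C i ≠ 0 → i ≠ e → Y i = 0) : Y e = 0 := by
  by_contra hYe
  have ho := orth_iff_s7.1 (hC.1.2 Y hY)
  have huniq : ∀ i s, s ≠ 0 → C i * Y i = s → i = e := by
    intro i s hs hi
    by_contra hie
    by_cases h0 : C i = 0
    · exact hs (by rw [← hi, h0, zero_mul])
    · exact hs (by rw [← hi, h i h0 hie, mul_zero])
  have hs (a b : SignType) (ha : a ≠ 0) (hb : b ≠ 0) :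
      (a * b = 1 ∧ a * b ≠ -1) ∨ (a * b = -1 ∧ a * b ≠ 1) := by revert a b; decide
  rcases hs _ _ hCe hYe with ⟨h1, h2⟩ | ⟨h1, h2⟩
  · obtain ⟨i, hi⟩ := ho.1 ⟨e, h1⟩
    exact h2 (huniq i _ (by decide) hi ▸ hi)
  · obtain ⟨i, hi⟩ := ho.2 ⟨e, h1⟩
    exact h2 (huniq i _ (by decide) hi ▸ hi)

lemma indep_iff {I : Set α} :
    M.Indep I ↔ I ⊆ M.ground ∧ ∀ i ∈ I, ¬ M.Cl (I \ {i}) i := by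
  refine and_congr_right fun hI => ⟨fun h i hi hcl => ?_, fun h C hC hCI => ?_⟩
  · obtain ⟨C, hC, -, hCs⟩ := hcl.exists_circuit (Set.sdiff_subset.trans hI) (hI hi)
      (fun h => h.2 rfl)
    rw [Set.insert_sdiff_singleton, Set.insert_eq_of_mem hi] at hCs
    exact h C hC hCs
  · obtain ⟨i, hi⟩ := exists_ne_zero hC.2.1
    exact h i (hCI hi) fun Y hY hY0 => eq_zero_of_circuit hC hY hi fun j hj hji =>
      hY0 j ⟨hCI hj, hji⟩

/-- The Steinitz bound: an independent set in the closure of `I` has at most `|I|` elements. -/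
lemma steinitz {I J : Set α} (hI : I.Finite)
    (hJi : ∀ j ∈ J, ¬ M.Cl (J \ {j}) j) (hJI : ∀ j ∈ J, M.Cl I j) : J.ncard ≤ I.ncard := by
  generalize hk : (I \ J).ncard = k
  induction k generalizing I with
  | zero =>
    rw [Set.ncard_eq_zero hI.sdiff, Set.sdiff_eq_empty] at hk
    have : J ⊆ I := fun j hj => by
      by_contra hjI
      exact hJi j hj ((hJI j hj).mono fun i hi => ⟨hk hi, fun h => hjI (h ▸ hi)⟩)
    exact Set.ncard_le_ncard this hI
  | succ k ih =>
    obtain ⟨i, hi⟩ : (I \ J).Nonempty := by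
      rw [← Set.ncard_pos hI.sdiff]; omega
    have hrem : ((I \ {i}) \ J).ncard = k := by
      have : (I \ {i}) \ J = (I \ J) \ {i} := by
        ext x; simp only [Set.mem_sdiff]; tauto
      rw [this, Set.ncard_sdiff_singleton_of_mem hi, hk]; rfl
    by_cases hall : ∀ j ∈ J, M.Cl (I \ {i}) j
    · exact (ih hI.sdiff hall hrem).trans (Set.ncard_le_ncard Set.sdiff_subset hI)
    · push Not at hall
      obtain ⟨j, hj, hjn⟩ := hall
      have hjnot : j ∉ I \ {i} := fun h => hjn (cl_of_mem h)
      have hins : insert i (I \ {i}) = I := by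
        rw [Set.insert_sdiff_singleton, Set.insert_eq_of_mem hi.1]
      have hex : M.Cl (insert j (I \ {i})) i := Cl.exchange (hins.symm ▸ hJI j hj) hjn
      have hcl : ∀ x ∈ J, M.Cl (insert j (I \ {i})) x := fun x hx =>
        (hJI x hx).trans fun b hb => by
          by_cases hbi : b = i
          · rw [hbi]; exact hex
          · exact cl_of_mem (Or.inr ⟨hb, hbi⟩)
      have hcard : (insert j (I \ {i})).ncard = I.ncard := by
        rw [Set.ncard_insert_of_notMem hjnot hI.sdiff, Set.ncard_sdiff_singleton_add_one hi.1 hI]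
      rw [← hcard]
      refine ih (hI.sdiff.insert j) hcl ?_
      rw [Set.insert_sdiff_of_mem _ hj, hrem]

lemma Indep.insert {I : Set α} (hI : M.Indep I) {e : α} (he : ¬ M.Cl I e) :
    M.Indep (insert e I) := by
  have heI : e ∉ I := fun h => he (cl_of_mem h)
  have he' := he
  unfold Cl at he'
  push Not at he'
  obtain ⟨Y, hY, hYI, hYe⟩ := he'
  rw [indep_iff] at hI ⊢
  refine ⟨Set.insert_subset (M.supp_subset Y hY hYe) hI.1, ?_⟩
  rintro i (rfl | hi) hcl
  · rw [Set.insert_sdiff_of_mem _ (Set.mem_singleton _), Set.sdiff_singleton_eq_self heI] at hcl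
    exact he hcl
  · refine hI.2 i hi fun W hW hWI => ?_
    by_contra hWi
    have hie : i ≠ e := fun h => heI (h ▸ hi)
    have hcov : ∀ Z ∈ M.covectors, Z e = 0 → (∀ a ∈ I, Z a = W a) → False := by
      intro Z hZ hZe hZW
      refine hWi ?_
      rw [← hZW i hi]
      refine hcl Z hZ ?_
      rintro a ⟨rfl | ha, hai⟩
      · exact hZe
      · rw [hZW a ha, hWI a ⟨ha, hai⟩]
    by_cases hWe : W e = 0
    · exact hcov W hW hWe fun _ _ => rfl
    · obtain ⟨Z, hZ, hZe, hZo⟩ := elim_zero hW hY hWe hYe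
      exact hcov Z hZ hZe fun a ha => hZo a (hYI a ha)

lemma Indep.finite {I : Set α} (hI : M.Indep I) : I.Finite := M.ground_finite.subset hI.1

lemma rank_isGreatest (M : OrientedMatroid α) :
    IsGreatest {k | ∃ I : Set α, I ⊆ M.ground ∧ M.Indep I ∧ I.ncard = k} M.rank := by
  have hb : BddAbove {k | ∃ I : Set α, I ⊆ M.ground ∧ M.Indep I ∧ I.ncard = k} := by
    refine ⟨M.ground.ncard, ?_⟩
    rintro k ⟨I, hI, -, rfl⟩
    exact Set.ncard_le_ncard hI M.ground_finite
  have hne : {k | ∃ I : Set α, I ⊆ M.ground ∧ M.Indep I ∧ I.ncard = k}.Nonempty :=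
    ⟨0, ∅, Set.empty_subset _, indep_iff.2 ⟨Set.empty_subset _, by simp⟩, Set.ncard_empty _⟩
  exact ⟨Nat.sSup_mem hne hb, fun k hk => le_csSup hb hk⟩

lemma Indep.ncard_le_rank {I : Set α} (hI : M.Indep I) : I.ncard ≤ M.rank :=
  (rank_isGreatest M).2 ⟨I, hI.1, hI, rfl⟩

lemma Indep.cl_of_ncard_eq {I : Set α} (hI : M.Indep I) (h : I.ncard = M.rank) (e : α) :
    M.Cl I e := by
  by_contra he
  have := (hI.insert he).ncard_le_rank
  rw [Set.ncard_insert_of_notMem (fun h => he (cl_of_mem h)) hI.finite] at this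
  omega

lemma Indep.ncard_eq_of_cl {I : Set α} (hI : M.Indep I) (h : ∀ e, M.Cl I e) :
    I.ncard = M.rank := by
  refine le_antisymm hI.ncard_le_rank ?_
  obtain ⟨J, -, hJ, hJr⟩ := (rank_isGreatest M).1
  rw [← hJr]
  exact steinitz hI.finite (indep_iff.1 hJ).2 fun j _ => h j

lemma exists_base (M : OrientedMatroid α) :
    ∃ B, M.Indep B ∧ B.ncard = M.rank ∧ ∀ e, M.Cl B e := by
  obtain ⟨B, -, hB, hBr⟩ := (rank_isGreatest M).1
  exact ⟨B, hB, hBr, hB.cl_of_ncard_eq hBr⟩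

lemma cl_del_iff {A : Set α} {h e : α} (hA : h ∉ A) (he : e ≠ h) :
    (M.del {h}).Cl A e ↔ M.Cl A e := by
  have hAh : ∀ a ∈ A, a ∉ ({h} : Set α) := fun a ha hah =>
    hA (Set.mem_singleton_iff.1 hah ▸ ha)
  constructor
  · intro hcl Y hY hYA
    have := hcl _ ⟨Y, hY, rfl⟩ fun a ha => by rw [res_of_notMem (hAh a ha), hYA a ha]
    rwa [res_of_notMem (by simpa using he)] at this
  · rintro hcl _ ⟨Y, hY, rfl⟩ hYA
    rw [res_of_notMem (by simpa using he)]
    exact hcl Y hY fun a ha => by rw [← hYA a ha, res_of_notMem (hAh a ha)]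

lemma indep_del_iff {I : Set α} {h : α} : (M.del {h}).Indep I ↔ M.Indep I ∧ h ∉ I := by
  rw [indep_iff, indep_iff]
  constructor
  · rintro ⟨h1, h2⟩
    have hI : h ∉ I := fun hh => (h1 hh).2 rfl
    exact ⟨⟨fun i hi => (h1 hi).1, fun i hi hcl => h2 i hi
      ((cl_del_iff (fun hh => hI hh.1) (by rintro rfl; exact hI hi)).2 hcl)⟩, hI⟩
  · rintro ⟨⟨h1, h2⟩, hI⟩
    exact ⟨fun i hi => ⟨h1 hi, fun hh => hI (Set.mem_singleton_iff.1 hh ▸ hi)⟩,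
      fun i hi hcl => h2 i hi
      ((cl_del_iff (fun hh => hI hh.1) (by rintro rfl; exact hI hi)).1 hcl)⟩

/-- Deleting `h` preserves the rank exactly when `h` is not a coloop, that is, when no covector
has support `{h}`. -/
lemma rank_del_iff {h : α} :
    M.rank = (M.del {h}).rank ↔ ∀ Y ∈ M.covectors, (∀ i, i ≠ h → Y i = 0) → Y h = 0 := by
  obtain ⟨B, hB, hBr, hBs⟩ := exists_base (M.del {h})
  have hB' := indep_del_iff.1 hB
  constructor
  · intro hr Y hY hY0
    by_contra hYh
    have hn : ¬ M.Cl B h := fun hcl => hYh (hcl Y hY fun a ha => hY0 a fun hh =>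
      hB'.2 (hh ▸ ha))
    have := (hB'.1.insert hn).ncard_le_rank
    rw [Set.ncard_insert_of_notMem hB'.2 hB.finite] at this
    omega
  · intro hno
    rw [← hBr]
    refine (hB'.1.ncard_eq_of_cl fun e => ?_).symm
    by_cases he : e = h
    · rw [he]
      exact fun Y hY hYB => hno Y hY fun i hi => (cl_del_iff hB'.2 hi).1 (hBs i) Y hY hYB
    · exact (cl_del_iff hB'.2 he).1 (hBs e)

lemma IsCircuit.indep_sdiff {C : SignVec α} (hC : M.IsCircuit C) {e : α} (he : C e ≠ 0) :
    M.Indep (supp C \ {e}) := by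
  refine ⟨Set.sdiff_subset.trans hC.1.1, fun X hX hXC => ?_⟩
  have := hC.2.2 X hX.1 hX.2.1 (hXC.trans Set.sdiff_subset)
  have hmem : e ∈ supp X := this ▸ he
  exact (hXC hmem).2 rfl

/-- General position in terms of covectors: when `h` is not a coloop, it is in general position
if and only if every cocircuit of the deletion `M ∖ h` extends to `M` with a nonzero value at
`h`. -/
lemma genPos_iff {h : α} (hh : h ∈ M.ground)
    (hno : ∀ Y ∈ M.covectors, (∀ i, i ≠ h → Y i = 0) → Y h = 0) :
    GenPos M h ↔ ∀ Y ∈ M.covectors, (M.del {h}).IsCocircuit Y → Y h ≠ 0 := by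
  constructor
  · intro hG Y hY hYc hYh
    let H : Set α := {i | i ∈ M.ground ∧ i ≠ h ∧ Y i = 0}
    have hcl : M.Cl H h := by
      intro W hW hWH
      by_contra hWh
      -- `Z` keeps the value of `W` at `h` and has support strictly smaller than `Y` elsewhere.
      have hZ : ∃ Z ∈ M.covectors, Z h ≠ 0 ∧ (∀ i, i ≠ h → Y i = 0 → Z i = 0) ∧
          ∃ i, Y i ≠ 0 ∧ Z i = 0 := by
        have hWY : ∀ i, i ≠ h → Y i = 0 → W i = 0 := fun i hi hYi => by
          by_contra h0
          exact h0 (hWH i ⟨M.supp_subset W hW h0, hi, hYi⟩)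
        obtain ⟨i, hi⟩ := exists_ne_zero hYc.2.1
        by_cases hWi : W i = 0
        · exact ⟨W, hW, hWh, hWY, i, hi, hWi⟩
        · obtain ⟨Z, hZ, hZi, hZo⟩ := elim_zero hW hY hWi hi
          exact ⟨Z, hZ, by rwa [hZo h hYh], fun j hj hYj => by rw [hZo j hYj, hWY j hj hYj],
            i, hi, hZi⟩
      obtain ⟨Z, hZ, hZh, hZY, i, hYi, hZi⟩ := hZ
      refine hZh (hno Z hZ fun j hj => ?_)
      by_contra hZj
      have hne : restrictAway {h} Z ≠ 0 := fun h0 => by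
        have := congrFun h0 j
        rw [res_of_notMem (by simpa using hj)] at this
        exact hZj this
      have hsub : supp (restrictAway {h} Z) ⊆ supp Y := fun k hk hYk => by
        obtain ⟨h1, h2⟩ := res_ne_zero hk
        exact h2 (hZY k (by simpa using h1) hYk)
      have heq := hYc.2.2 _ ⟨Z, hZ, rfl⟩ hne hsub
      have : i ∈ supp (restrictAway {h} Z) := heq ▸ hYi
      exact (res_ne_zero this).2 hZi
    obtain ⟨C, hC, hCh, hCs⟩ := hcl.exists_circuit (fun i hi => hi.1) hh (fun hi => hi.2.1 rfl)
    have hind := hC.indep_sdiff hCh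
    have hcard : (supp C \ {h}).ncard = M.rank := by
      rw [Set.ncard_sdiff_singleton_of_mem hCh, hG C hC hCh]
      rfl
    obtain ⟨i, hi⟩ := exists_ne_zero hYc.2.1
    refine hi (hind.cl_of_ncard_eq hcard i Y hY fun a ha => ?_)
    rcases hCs ha.1 with h1 | h1
    · exact absurd h1 ha.2
    · exact h1.2.2
  · intro hG C hC hCh
    have hind := hC.indep_sdiff hCh
    have hfin : (supp C).Finite := M.ground_finite.subset hC.1.1
    suffices hsp : ∀ e, M.Cl (supp C \ {h}) e by
      rw [← hind.ncard_eq_of_cl hsp, Set.ncard_sdiff_singleton_add_one hCh hfin]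
    by_contra hsp
    -- The nonzero covectors vanishing on the circuit; they all vanish at `h` by orthogonality.
    let S : Set (SignVec α) := {Y | Y ∈ M.covectors ∧ Y ≠ 0 ∧ ∀ a ∈ supp C \ {h}, Y a = 0}
    have hS0 : ∀ Y ∈ M.covectors, (∀ a ∈ supp C \ {h}, Y a = 0) → Y h = 0 := fun Y hY hY0 =>
      eq_zero_of_circuit hC hY hCh fun i hi hih => hY0 i ⟨hi, hih⟩
    have hSne : S.Nonempty := by
      unfold Cl at hsp
      push Not at hsp
      obtain ⟨e, Y, hY, hY0, hYe⟩ := hsp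
      exact ⟨Y, hY, fun h0 => hYe (by rw [h0]; rfl), hY0⟩
    obtain ⟨Y, ⟨hY, hYne, hY0⟩, hmin⟩ := exists_minimalFor_of_wellFoundedLT (· ∈ S)
      (fun Y => (supp Y).ncard) hSne
    have hYh := hS0 Y hY hY0
    have hres : ∀ Z : SignVec α, Z h = 0 → restrictAway {h} Z = Z := fun Z hZ =>
      res_eq_self (by rintro a rfl; exact hZ)
    refine hG Y hY ⟨⟨Y, hY, (hres Y hYh).symm⟩, hYne, ?_⟩ hYh
    rintro _ ⟨Z, hZ, rfl⟩ hZne hZY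
    have hZ0 : ∀ a ∈ supp C \ {h}, Z a = 0 := fun a ha => by
      by_contra hZa
      have : a ∈ supp (restrictAway {h} Z) := by
        show _ ≠ _
        rwa [res_of_notMem (fun hh => ha.2 hh)]
      exact hZY this (hY0 a ha)
    have hZh := hS0 Z hZ hZ0
    rw [hres Z hZh] at hZne hZY ⊢
    have hfY : (supp Y).Finite := M.ground_finite.subset (M.supp_subset Y hY)
    exact Set.eq_of_subset_of_ncard_le hZY
      (hmin (j := Z) ⟨hZ, hZne, hZ0⟩ (Set.ncard_le_ncard hZY hfY)) hfY

end Rank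

/-! ### Lifting a one-element extension of a contraction -/

section Lift

variable {α : Type*} {N T : OrientedMatroid α} {f h : α}

/-- `T` is an extension of the contraction `N / f` by the new element `h`, expressed in terms of
covectors. -/
structure LiftData (N T : OrientedMatroid α) (f h : α) : Prop where
  ne : f ≠ h
  notMem : h ∉ N.ground
  res_mem : ∀ y ∈ T.covectors, restrictAway {h} y ∈ N.covectors
  eq_zero : ∀ y ∈ T.covectors, y f = 0
  lift : ∀ Y ∈ N.covectors, Y f = 0 → ∃ y ∈ T.covectors, ∀ i, i ≠ h → y i = Y i

/-- The covectors of the lift of `T` to an extension of `N` by `h`. Geometrically the new element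
is `h = f + ε h'` with `ε` infinitesimal and `h'` a representative of the extending element of `T`.
A covector `X` vanishing at `f` is a covector of `T`. If `X f ≠ 0`, then `X h` equals `X f`, unless
some covector `y` of `T` whose sign at `h` opposes `X f` agrees with `X` on its support off `h`;
in that case `X h` is arbitrary. -/
def liftCov (N T : OrientedMatroid α) (f h : α) : Set (SignVec α) :=
  {X | restrictAway {h} X ∈ N.covectors ∧
    ((X f = 0 ∧ X ∈ T.covectors) ∨
      (X f ≠ 0 ∧ (X h = X f ∨
        ∃ y ∈ T.covectors, y h = -X f ∧ ∀ i, i ≠ h → y i ≠ 0 → y i = X i)))}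

/-- Off `h`, the sign vector `A` satisfies the requirement imposed on the result of an elimination
between `X` and `X'`. -/
def Elim (h : α) (X X' A : SignVec α) : Prop :=
  ∀ i, i ≠ h → i ∉ sep X X' → A i = compose X X' i

/-- A weakening of `Elim` in which the entries are also allowed to be zero. -/
def WeakElim (h : α) (X X' y : SignVec α) : Prop :=
  ∀ i, i ≠ h → i ∉ sep X X' → y i ≠ 0 → y i = compose X X' i

lemma res_off {X : SignVec α} {i : α} (hi : i ≠ h) : restrictAway {h} X i = X i :=
  res_of_notMem (by simpa using hi)

lemma res_at {X : SignVec α} : restrictAway {h} X h = 0 := res_of_mem rfl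

lemma res_congr {X Y : SignVec α} (hXY : ∀ i, i ≠ h → X i = Y i) :
    restrictAway {h} X = restrictAway {h} Y := by
  ext1 i
  by_cases hi : i = h
  · rw [hi, res_at, res_at]
  · rw [res_off hi, res_off hi, hXY i hi]

lemma Elim.symm {X X' A : SignVec α} (hA : Elim h X X' A) : Elim h X' X A := fun i hi hs => by
  rw [sep_comm] at hs
  rw [hA i hi hs, compose_comm_of hs]

lemma Elim.congr {X X' A Z : SignVec α} (hA : Elim h X X' A) (hZ : ∀ i, i ≠ h → Z i = A i) :
    Elim h X X' Z := fun i hi hs => by rw [hZ i hi, hA i hi hs]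

lemma elim_compose_res (X X' : SignVec α) :
    Elim h X X' (compose (restrictAway {h} X) (restrictAway {h} X')) := fun i hi _ => by
  rw [res_compose, res_off hi]

lemma WeakElim.compose {X X' y Z : SignVec α} (hy : WeakElim h X X' y) (hZ : Elim h X X' Z) :
    Elim h X X' (compose (restrictAway {h} y) Z) := fun i hi hs => by
  by_cases h0 : y i = 0
  · rw [compose_of_eq (by rw [res_off hi, h0]), hZ i hi hs]
  · rw [compose_of_ne (by rwa [res_off hi]), res_off hi, hy i hi hs h0]

lemma WeakElim.left {X X' y : SignVec α} (hy : ∀ i, i ≠ h → y i ≠ 0 → y i = X i) :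
    WeakElim h X X' y := fun i hi _ h0 => by
  rw [hy i hi h0, compose_of_ne (by rwa [← hy i hi h0])]

lemma WeakElim.right {X X' y : SignVec α} (hy : ∀ i, i ≠ h → y i ≠ 0 → y i = X' i) :
    WeakElim h X X' y := fun i hi hs h0 => by
  rw [compose_comm_of hs, hy i hi h0, compose_of_ne (by rwa [← hy i hi h0])]

/-- Composing the result of an elimination with one of the two operands keeps the elimination
requirement. -/
lemma Elim.compose_left {X X' A : SignVec α} (hA : Elim h X X' A) :
    Elim h X X' (compose A (restrictAway {h} X)) := fun i hi hs => by
  have hh := hA i hi hs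
  by_cases h0 : A i = 0
  · rw [compose_of_eq h0, res_off hi, ← hh, h0]
    by_contra hX
    rw [compose_of_ne hX] at hh
    exact hX (hh ▸ h0)
  · rw [compose_of_ne h0, hh]

lemma res_elim {X X' : SignVec α} (hX : restrictAway {h} X ∈ N.covectors)
    (hX' : restrictAway {h} X' ∈ N.covectors) {e : α} (heh : e ≠ h) (he : e ∈ sep X X') :
    ∃ Z ∈ N.covectors, Z e = 0 ∧ Elim h X X' Z := by
  obtain ⟨Z, hZ, hZe, hZo⟩ := N.elim _ hX _ hX' e (res_sep.2 ⟨by simpa using heh, he⟩)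
  refine ⟨Z, hZ, hZe, fun i hi hs => ?_⟩
  rw [hZo i fun hs' => hs (res_sep.1 hs').2, res_compose, res_off hi]

namespace LiftData

lemma apply_h (D : LiftData N T f h) {Y : SignVec α} (hY : Y ∈ N.covectors) : Y h = 0 := by
  by_contra h0
  exact D.notMem (N.supp_subset Y hY h0)

lemma res_self (D : LiftData N T f h)
    {Y : SignVec α} (hY : Y ∈ N.covectors) : restrictAway {h} Y = Y :=
  res_eq_self fun a ha => by rw [Set.mem_singleton_iff.1 ha, D.apply_h hY]

lemma of_mem (D : LiftData N T f h) {y : SignVec α} (hy : y ∈ T.covectors) : y ∈ liftCov N T f h :=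
  ⟨D.res_mem y hy, Or.inl ⟨D.eq_zero y hy, hy⟩⟩

lemma mk_eq (D : LiftData N T f h) {A : SignVec α} (hA : A ∈ N.covectors) (hAf : A f ≠ 0) :
    ∃ Z ∈ liftCov N T f h, Z h = A f ∧ ∀ i, i ≠ h → Z i = A i := by
  classical
  have hoff : ∀ i, i ≠ h → Function.update A h (A f) i = A i := fun i hi =>
    Function.update_of_ne hi _ _
  refine ⟨Function.update A h (A f), ⟨?_, Or.inr ⟨?_, Or.inl ?_⟩⟩, Function.update_self .., hoff⟩
  · rwa [res_congr hoff, D.res_self hA]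
  · rwa [hoff f D.ne]
  · rw [Function.update_self, hoff f D.ne]

/-- In the presence of a witness `y`, the new entry of a lifted covector of `N` is arbitrary. -/
lemma mk_any (D : LiftData N T f h)
    {A y : SignVec α} (hA : A ∈ N.covectors) (hAf : A f ≠ 0) (hy : y ∈ T.covectors)
    (hyh : y h = -A f) (hyA : ∀ i, i ≠ h → y i ≠ 0 → y i = A i) (t : SignType) :
    ∃ Z ∈ liftCov N T f h, Z h = t ∧ ∀ i, i ≠ h → Z i = A i := by
  classical
  have hoff : ∀ i, i ≠ h → Function.update A h t i = A i := fun i hi =>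
    Function.update_of_ne hi _ _
  refine ⟨Function.update A h t, ⟨?_, Or.inr ⟨?_, Or.inr ⟨y, hy, ?_, ?_⟩⟩⟩,
    Function.update_self .., hoff⟩
  · rwa [res_congr hoff, D.res_self hA]
  · rwa [hoff f D.ne]
  · rw [hoff f D.ne, hyh]
  · intro i hi h0
    rw [hoff i hi, hyA i hi h0]

lemma exists_lift (D : LiftData N T f h) {A : SignVec α} (hA : A ∈ N.covectors) :
    ∃ Z ∈ liftCov N T f h, ∀ i, i ≠ h → Z i = A i := by
  by_cases h0 : A f = 0
  · obtain ⟨y, hy, hyA⟩ := D.lift A hA h0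
    exact ⟨y, D.of_mem hy, hyA⟩
  · obtain ⟨Z, hZ, -, hZA⟩ := D.mk_eq hA h0
    exact ⟨Z, hZ, hZA⟩

lemma witness {X : SignVec α} (hX : X ∈ liftCov N T f h) (hf : X f ≠ 0) (hne : X h ≠ X f) :
    ∃ y ∈ T.covectors, y h = -X f ∧ ∀ i, i ≠ h → y i ≠ 0 → y i = X i := by
  rcases hX.2 with h1 | ⟨-, h1 | h1⟩
  · exact absurd h1.1 hf
  · exact absurd h1 hne
  · exact h1

lemma mem_of_zero {X : SignVec α} (hX : X ∈ liftCov N T f h) (hf : X f = 0) :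
    X ∈ T.covectors := by
  rcases hX.2 with h1 | h1
  · exact h1.2
  · exact absurd hf h1.1

lemma witness' {X : SignVec α} (hX : X ∈ liftCov N T f h) {s : SignType} (hs : s ≠ 0)
    (hf : X f = 0 ∨ X f = s) (hh : X h = -s) :
    ∃ y ∈ T.covectors, y h = -s ∧ ∀ i, i ≠ h → y i ≠ 0 → y i = X i := by
  rcases hf with hf | hf
  · exact ⟨X, mem_of_zero hX hf, hh, fun _ _ _ => rfl⟩
  · subst hf
    refine witness hX hs fun h0 => hs ?_
    rw [hh] at h0
    revert h0; generalize X f = a; revert a; decide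

lemma compose_mem {X X' : SignVec α} (hX : X ∈ liftCov N T f h) (hX' : X' ∈ liftCov N T f h) :
    compose X X' ∈ liftCov N T f h := by
  refine ⟨res_compose (α := α) ▸ N.compose_mem _ hX.1 _ hX'.1, ?_⟩
  by_cases hf : X f = 0
  · have hXT := mem_of_zero hX hf
    rw [compose_of_eq hf]
    by_cases hf' : X' f = 0
    · exact Or.inl ⟨hf', T.compose_mem _ hXT _ (mem_of_zero hX' hf')⟩
    · refine Or.inr ⟨hf', ?_⟩
      by_cases hh : X h = 0
      · rw [compose_of_eq hh]
        by_cases hh' : X' h = X' f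
        · exact Or.inl hh'
        · obtain ⟨y, hy, hyh, hyX⟩ := witness hX' hf' hh'
          refine Or.inr ⟨compose X y, T.compose_mem _ hXT _ hy, ?_, fun i hi h0 => ?_⟩
          · rw [compose_of_eq hh, hyh]
          · by_cases hXi : X i = 0
            · rw [compose_of_eq hXi] at h0 ⊢
              rw [compose_of_eq hXi, hyX i hi h0]
            · rw [compose_of_ne hXi, compose_of_ne hXi]
      · rw [compose_of_ne hh]
        by_cases hh' : X h = X' f
        · exact Or.inl hh'
        · refine Or.inr ⟨X, hXT, ?_, fun i _ h0 => (compose_of_ne h0).symm⟩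
          revert hh hf' hh'
          generalize X h = a; generalize X' f = b; revert a b; decide
  · rw [compose_of_ne hf]
    refine Or.inr ⟨hf, ?_⟩
    by_cases hh : X h = X f
    · rw [compose_of_ne (hh ▸ hf)]
      exact Or.inl hh
    · obtain ⟨y, hy, hyh, hyX⟩ := witness hX hf hh
      exact Or.inr ⟨y, hy, hyh, fun i hi h0 => by
        rw [compose_of_ne (hyX i hi h0 ▸ h0), hyX i hi h0]⟩

lemma compose_f {y Z : SignVec α} (hfh : f ≠ h) (hy : y f = 0) :
    compose (restrictAway {h} y) Z f = Z f := by
  rw [compose_of_eq (by rw [res_off hfh, hy])]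

lemma le_compose {y Z : SignVec α} : ∀ i, i ≠ h → y i ≠ 0 →
    y i = compose (restrictAway {h} y) Z i := fun i hi h0 => by
  rw [compose_of_ne (by rwa [res_off hi]), res_off hi]

/-- Elimination of the new element `h`. -/
lemma elim_h (D : LiftData N T f h)
    {X X' : SignVec α} (hX : X ∈ liftCov N T f h) (hX' : X' ∈ liftCov N T f h)
    (hs : h ∈ sep X X') : ∃ Z ∈ liftCov N T f h, Z h = 0 ∧ Elim h X X' Z := by
  by_cases hf : f ∈ sep X X'
  · obtain ⟨Z, hZ, hZf, hZe⟩ := res_elim hX.1 hX'.1 D.ne hf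
    obtain ⟨z, hz, hzZ⟩ := D.lift Z hZ hZf
    by_cases hzh : z h = 0
    · exact ⟨z, D.of_mem hz, hzh, hZe.congr hzZ⟩
    have hX'f : X' f ≠ 0 := by
      intro h0
      have := hf.1
      rw [h0, neg_zero] at this
      exact hf.2 this
    have hle : ∀ W : SignVec α, ∀ i, i ≠ h → z i ≠ 0 → z i = compose Z W i :=
      fun W i hi h0 => by
        rw [compose_of_ne (by rwa [← hzZ i hi]), hzZ i hi]
    have hfX : ∀ W : SignVec α, compose Z (restrictAway {h} W) f = W f := fun W => by
      rw [compose_of_eq hZf, res_off D.ne]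
    by_cases hzs : z h = -X f
    · obtain ⟨B, hB, hBh, hBo⟩ := D.mk_any (N.compose_mem _ hZ _ hX.1) (by rw [hfX]; exact hf.2)
        hz (by rw [hfX, hzs]) (hle _) 0
      exact ⟨B, hB, hBh, hZe.compose_left.congr hBo⟩
    · have hzs' : z h = -X' f := by
        have h1 := hf.1
        have h2 := hf.2
        revert hzs hzh h1 h2
        generalize z h = a; generalize X f = b; generalize X' f = c; revert a b c; decide
      obtain ⟨B, hB, hBh, hBo⟩ := D.mk_any (N.compose_mem _ hZ _ hX'.1) (by rw [hfX]; exact hX'f)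
        hz (by rw [hfX, hzs']) (hle _) 0
      exact ⟨B, hB, hBh, hZe.symm.compose_left.symm.congr hBo⟩
  · by_cases h0 : compose X X' f = 0
    · have hXf : X f = 0 := by
        by_contra hne
        rw [compose_of_ne hne] at h0
        exact hne h0
      have hXf' : X' f = 0 := by rwa [compose_of_eq hXf] at h0
      obtain ⟨Z, hZ, hZh, hZo⟩ := T.elim _ (mem_of_zero hX hXf) _ (mem_of_zero hX' hXf') h hs
      exact ⟨Z, D.of_mem hZ, hZh, fun i _ hi => hZo i hi⟩
    · have hsg (a a' b b' : SignType) (h1 : ¬ (a = -a' ∧ a ≠ 0)) (h2 : b = -b' ∧ b ≠ 0)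
          (h3 : (if a ≠ 0 then a else a') ≠ 0) :
          ((a = 0 ∨ a = if a ≠ 0 then a else a') ∧ b = -if a ≠ 0 then a else a') ∨
          ((a' = 0 ∨ a' = if a ≠ 0 then a else a') ∧ b' = -if a ≠ 0 then a else a') := by
        revert a a' b b'; decide
      have hw : ∃ y ∈ T.covectors, y h = -compose X X' f ∧ WeakElim h X X' y := by
        rcases hsg _ _ _ _ hf hs h0 with ⟨h1, h2⟩ | ⟨h1, h2⟩
        · obtain ⟨y, hy, hyh, hyX⟩ := witness' hX h0 h1 h2
          exact ⟨y, hy, hyh, .left hyX⟩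
        · obtain ⟨y, hy, hyh, hyX⟩ := witness' hX' h0 h1 h2
          exact ⟨y, hy, hyh, .right hyX⟩
      obtain ⟨y, hy, hyh, hyw⟩ := hw
      have hAf : compose (restrictAway {h} y)
          (compose (restrictAway {h} X) (restrictAway {h} X')) f = compose X X' f := by
        rw [compose_f D.ne (D.eq_zero y hy), res_compose, res_off D.ne]
      obtain ⟨B, hB, hBh, hBo⟩ := D.mk_any
        (N.compose_mem _ (D.res_mem y hy) _ (N.compose_mem _ hX.1 _ hX'.1))
        (by rw [hAf]; exact h0) hy (by rw [hAf, hyh]) le_compose 0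
      exact ⟨B, hB, hBh, (hyw.compose (elim_compose_res X X')).congr hBo⟩

/-- Elimination of `e ≠ h` between covectors of opposite sign at `f`, with the sign at `h` of the
result prescribed to be that of `X f`, given a covector of `T` with this sign below `X'`. -/
lemma elim_opposite (D : LiftData N T f h)
    {X X' y : SignVec α} (hX : restrictAway {h} X ∈ N.covectors)
    (hX' : restrictAway {h} X' ∈ N.covectors) (hf : f ∈ sep X X') (hy : y ∈ T.covectors)
    (hyh : y h = X f) (hyX : ∀ i, i ≠ h → y i ≠ 0 → y i = X' i) {e : α} (heh : e ≠ h)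
    (he : e ∈ sep X X') : ∃ Z ∈ liftCov N T f h, Z e = 0 ∧ Z h = X f ∧ Elim h X X' Z := by
  obtain ⟨Z₀, hZ₀, hZ₀e, hZ₀E⟩ := res_elim hX hX' heh he
  by_cases hye : y e = 0
  · have hE : Elim h X X' (compose (restrictAway {h} y) Z₀) :=
      (WeakElim.right hyX).compose hZ₀E
    have hAN := N.compose_mem _ (D.res_mem y hy) _ hZ₀
    have hAf : compose (restrictAway {h} y) Z₀ f = Z₀ f := compose_f D.ne (D.eq_zero y hy)
    have hAe : compose (restrictAway {h} y) Z₀ e = 0 := by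
      rw [compose_of_eq (by rw [res_off heh, hye]), hZ₀e]
    by_cases h0 : Z₀ f = 0
    · obtain ⟨z, hz, hzZ⟩ := D.lift Z₀ hZ₀ h0
      have hoff : ∀ i, i ≠ h → compose y z i = compose (restrictAway {h} y) Z₀ i :=
        fun i hi => by simp only [compose, res_off hi, hzZ i hi]
      refine ⟨compose y z, D.of_mem (T.compose_mem _ hy _ hz), ?_, ?_, hE.congr hoff⟩
      · rw [hoff e heh, hAe]
      · rw [compose_of_ne (by rw [hyh]; exact hf.2), hyh]
    · by_cases h1 : Z₀ f = X f
      · obtain ⟨B, hB, hBh, hBo⟩ := D.mk_eq hAN (by rw [hAf]; exact h0)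
        exact ⟨B, hB, by rw [hBo e heh, hAe], by rw [hBh, hAf, h1], hE.congr hBo⟩
      · have h2 : X f = -Z₀ f := by
          have h3 := hf.2
          revert h0 h1 h3
          generalize Z₀ f = a; generalize X f = b; revert a b; decide
        obtain ⟨B, hB, hBh, hBo⟩ := D.mk_any hAN (by rw [hAf]; exact h0) hy
          (by rw [hAf, hyh, h2]) le_compose (X f)
        exact ⟨B, hB, by rw [hBo e heh, hAe], hBh, hE.congr hBo⟩
  · have hey : e ∈ sep X y := ⟨by rw [hyX e heh hye]; exact he.1, he.2⟩
    obtain ⟨Z, hZ, hZe, hZE⟩ := res_elim hX (D.res_mem y hy) heh hey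
    have hfs : f ∉ sep X y := fun hs => hs.2 (by rw [hs.1, D.eq_zero y hy, neg_zero])
    have hZf : Z f = X f := by rw [hZE f D.ne hfs, compose_of_ne hf.2]
    have hw : WeakElim h X X' Z := fun i hi hs h0 => by
      have hs' : i ∉ sep X y := fun hs' => by
        have hyi : y i ≠ 0 := fun h0 => hs'.2 (by rw [hs'.1, h0, neg_zero])
        exact hs ⟨by rw [← hyX i hi hyi]; exact hs'.1, hs'.2⟩
      have hZi := hZE i hi hs'
      by_cases hXi : X i = 0
      · rw [compose_of_eq hXi] at hZi ⊢
        rw [hZi, hyX i hi (hZi ▸ h0)]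
      · rw [hZi, compose_of_ne hXi, compose_of_ne hXi]
    have hAf : compose (restrictAway {h} Z) Z₀ f = X f := by
      rw [compose_of_ne (by rw [res_off D.ne, hZf]; exact hf.2), res_off D.ne, hZf]
    obtain ⟨B, hB, hBh, hBo⟩ := D.mk_eq (A := compose (restrictAway {h} Z) Z₀)
      (N.compose_mem _ (by rwa [D.res_self hZ]) _ hZ₀) (by rw [hAf]; exact hf.2)
    refine ⟨B, hB, ?_, by rw [hBh, hAf], (hw.compose hZ₀E).congr hBo⟩
    rw [hBo e heh, compose_of_eq (by rw [res_off heh, hZe]), hZ₀e]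

/-- Elimination of `e ≠ h` between covectors of opposite sign at `f`. -/
lemma elim_sep (D : LiftData N T f h)
    {X X' : SignVec α} (hX : X ∈ liftCov N T f h) (hX' : X' ∈ liftCov N T f h)
    (hf : f ∈ sep X X') {e : α} (heh : e ≠ h) (he : e ∈ sep X X') :
    ∃ Z ∈ liftCov N T f h, Z e = 0 ∧ Elim h X X' Z ∧
      (h ∉ sep X X' → Z h = compose X X' h) := by
  by_cases hs : h ∈ sep X X'
  · obtain ⟨Z, hZ, hZe, hZE⟩ := res_elim hX.1 hX'.1 heh he
    obtain ⟨B, hB, hBo⟩ := D.exists_lift hZ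
    exact ⟨B, hB, by rw [hBo e heh, hZe], hZE.congr hBo, fun h0 => absurd hs h0⟩
  have hf' : f ∈ sep X' X := by rwa [sep_comm]
  have he' : e ∈ sep X' X := by rwa [sep_comm]
  have hXf := hf.1
  -- Either operand that does not have the sign of its `f`-entry at `h` provides a witness.
  have hpos : X' h ≠ X' f → ∃ Z ∈ liftCov N T f h, Z e = 0 ∧ Z h = X f ∧ Elim h X X' Z := by
    intro hne
    obtain ⟨y, hy, hyh, hyX⟩ := witness hX' hf'.2 hne
    exact D.elim_opposite hX.1 hX'.1 hf hy (by rw [hyh, hXf]) hyX heh he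
  have hneg : X h ≠ X f → ∃ Z ∈ liftCov N T f h, Z e = 0 ∧ Z h = -X f ∧ Elim h X X' Z := by
    intro hne
    obtain ⟨y, hy, hyh, hyX⟩ := witness hX hf.2 hne
    obtain ⟨Z, hZ, hZe, hZh, hZE⟩ :=
      D.elim_opposite hX'.1 hX.1 hf' hy (by rw [hyh, hf'.1]) hyX heh he'
    exact ⟨Z, hZ, hZe, by rw [hZh, hf'.1], hZE.symm⟩
  have hsg (a a' b b' : SignType) (h1 : a = -a' ∧ a ≠ 0) (h2 : ¬ (b = -b' ∧ b ≠ 0)) :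
      (b' ≠ a' ∧ (if b ≠ 0 then b else b') = a) ∨ (b ≠ a ∧ (if b ≠ 0 then b else b') = -a) ∨
      (b' ≠ a' ∧ b ≠ a ∧ (if b ≠ 0 then b else b') = 0) := by
    revert a a' b b'; decide
  rcases hsg _ _ _ _ hf hs with ⟨h1, h2⟩ | ⟨h1, h2⟩ | ⟨h1, h1', h2⟩
  · obtain ⟨Z, hZ, hZe, hZh, hZE⟩ := hpos h1
    exact ⟨Z, hZ, hZe, hZE, fun _ => hZh.trans h2.symm⟩
  · obtain ⟨Z, hZ, hZe, hZh, hZE⟩ := hneg h1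
    exact ⟨Z, hZ, hZe, hZE, fun _ => hZh.trans h2.symm⟩
  · obtain ⟨A, hA, hAe, hAh, hAE⟩ := hpos h1
    obtain ⟨B, hB, hBe, hBh, hBE⟩ := hneg h1'
    obtain ⟨Z, hZ, hZh, hZE⟩ := D.elim_h hA hB ⟨by rw [hAh, hBh, neg_neg], by rw [hAh]; exact hf.2⟩
    have hself (a : SignType) : ¬ (a = -a ∧ a ≠ 0) := by revert a; decide
    refine ⟨Z, hZ, ?_, fun i hi hi' => ?_, fun _ => hZh.trans h2.symm⟩
    · rw [hZE e heh (fun hs' => hs'.2 hAe), compose_of_eq hAe, hBe]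
    · have hAi := hAE i hi hi'
      have hBi := hBE i hi hi'
      rw [hZE i hi (fun hs' => hself _ ⟨(hAi.symm.trans hs'.1).trans (by rw [hBi]), hAi ▸ hs'.2⟩)]
      simp only [compose] at hAi hBi ⊢
      rw [hAi, hBi, ite_self]

/-- Elimination of `e ≠ h` between covectors that do not both vanish at `f` and have no opposite
signs there. -/
lemma elim_notSep (D : LiftData N T f h)
    {X X' : SignVec α} (hX : X ∈ liftCov N T f h) (hX' : X' ∈ liftCov N T f h)
    (hf : f ∉ sep X X') (h0 : compose X X' f ≠ 0) {e : α} (heh : e ≠ h) (he : e ∈ sep X X') :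
    ∃ Z ∈ liftCov N T f h, Z e = 0 ∧ Elim h X X' Z ∧
      (h ∉ sep X X' → Z h = compose X X' h) := by
  obtain ⟨Z, hZ, hZe, hZE⟩ := res_elim hX.1 hX'.1 heh he
  have hZf : Z f = compose X X' f := hZE f D.ne hf
  by_cases hu : h ∉ sep X X' → compose X X' f = compose X X' h
  · obtain ⟨B, hB, hBh, hBo⟩ := D.mk_eq hZ (by rw [hZf]; exact h0)
    exact ⟨B, hB, by rw [hBo e heh, hZe], hZE.congr hBo, fun hs => by rw [hBh, hZf, hu hs]⟩
  push Not at hu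
  obtain ⟨hs, hu⟩ := hu
  obtain ⟨s, hsdef⟩ : ∃ s, s = compose X X' f := ⟨_, rfl⟩
  have hsg (a a' b b' : SignType) (h1 : ¬ (a = -a' ∧ a ≠ 0)) (h2 : ¬ (b = -b' ∧ b ≠ 0))
      (h3 : (if a ≠ 0 then a else a') ≠ 0)
      (h4 : (if a ≠ 0 then a else a') ≠ if b ≠ 0 then b else b') :
      ((a = 0 ∨ a = if a ≠ 0 then a else a') ∧ (b = 0 ∨ b = -if a ≠ 0 then a else a')) ∧
      ((a' = 0 ∨ a' = if a ≠ 0 then a else a') ∧ (b' = 0 ∨ b' = -if a ≠ 0 then a else a')) ∧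
      (a ≠ 0 ∨ a' ≠ 0) := by
    revert a a' b b'; decide
  obtain ⟨⟨k1, k2⟩, ⟨k1', k2'⟩, k3⟩ := hsg _ _ _ _ hf hs h0 hu
  change X f = 0 ∨ X f = compose X X' f at k1
  change X h = 0 ∨ X h = -compose X X' f at k2
  change X' f = 0 ∨ X' f = compose X X' f at k1'
  change X' h = 0 ∨ X' h = -compose X X' f at k2'
  rw [← hsdef] at k1 k2 k1' k2' h0
  have hsn : s ≠ -s := by revert h0; generalize s = a; revert a; decide
  -- Below each operand lies a covector of `T`: the operand itself or a witness.
  have hw : ∀ W ∈ liftCov N T f h, (W f = 0 ∨ W f = s) → (W h = 0 ∨ W h = -s) →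
      ∃ y ∈ T.covectors, (∀ i, i ≠ h → y i ≠ 0 → y i = W i) ∧
        (y h = -s ∨ (y h = 0 ∧ W f = 0 ∧ y = W)) := by
    intro W hW w1 w2
    rcases w2 with w2 | w2
    · rcases w1 with w1 | w1
      · exact ⟨W, mem_of_zero hW w1, fun _ _ _ => rfl, Or.inr ⟨w2, w1, rfl⟩⟩
      · obtain ⟨y, hy, hyh, hyW⟩ := witness hW (by rw [w1]; exact h0)
          (by rw [w1, w2]; exact h0.symm)
        exact ⟨y, hy, hyW, Or.inl (by rw [hyh, w1])⟩
    · obtain ⟨y, hy, hyh, hyW⟩ := witness' hW h0 w1 w2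
      exact ⟨y, hy, hyW, Or.inl hyh⟩
  obtain ⟨y, hy, hyX, hyc⟩ := hw X hX k1 k2
  obtain ⟨y', hy', hyX', hyc'⟩ := hw X' hX' k1' k2'
  have hT : ∃ z ∈ T.covectors, z e = 0 ∧ z h = -s ∧ WeakElim h X X' z := by
    by_cases c1 : y h = -s ∧ y e = 0
    · exact ⟨y, hy, c1.2, c1.1, .left hyX⟩
    by_cases c2 : y' h = -s ∧ y' e = 0
    · exact ⟨y', hy', c2.2, c2.1, .right hyX'⟩
    have he2 : X' e ≠ 0 := fun h0 => he.2 (by rw [he.1, h0, neg_zero])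
    have hye : y e ≠ 0 := by
      rcases hyc with h1 | ⟨-, -, h1⟩
      · exact fun h2 => c1 ⟨h1, h2⟩
      · rw [h1]; exact he.2
    have hye' : y' e ≠ 0 := by
      rcases hyc' with h1 | ⟨-, -, h1⟩
      · exact fun h2 => c2 ⟨h1, h2⟩
      · rw [h1]; exact he2
    have hes : e ∈ sep y y' := ⟨by rw [hyX e heh hye, hyX' e heh hye', he.1], hye⟩
    obtain ⟨z, hz, hze, hzo⟩ := T.elim y hy y' hy' e hes
    refine ⟨z, hz, hze, ?_, fun i hi hi' hzi => ?_⟩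
    · have hval : (y h = -s ∨ y h = 0) ∧ (y' h = -s ∨ y' h = 0) ∧ (y h = -s ∨ y' h = -s) := by
        rcases hyc with h1 | ⟨h1, h2, -⟩
        · exact ⟨.inl h1, hyc'.imp_right And.left, .inl h1⟩
        · rcases hyc' with h1' | ⟨-, h2', -⟩
          · exact ⟨.inr h1, .inl h1', .inr h1'⟩
          · exact absurd k3 (by rw [h2, h2']; decide)
      have hsg2 (a b c : SignType) (hc : c ≠ 0)
          (hv : (a = -c ∨ a = 0) ∧ (b = -c ∨ b = 0) ∧ (a = -c ∨ b = -c)) :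
          ¬ (a = -b ∧ a ≠ 0) ∧ (if a ≠ 0 then a else b) = -c := by
        revert a b c; decide
      obtain ⟨h1, h2⟩ := hsg2 _ _ _ h0 hval
      exact (hzo h h1).trans h2
    · have hl := WeakElim.left (X' := X') hyX i hi hi'
      have hr := WeakElim.right (X := X) hyX' i hi hi'
      have hself (a b c : SignType) (h1 : a ≠ 0 → a = c) (h2 : b ≠ 0 → b = c) :
          ¬ (a = -b ∧ a ≠ 0) ∧ ((if a ≠ 0 then a else b) ≠ 0 →
            (if a ≠ 0 then a else b) = c) := by
        revert a b c; decide
      obtain ⟨h1, h2⟩ := hself _ _ _ hl hr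
      rw [hzo i h1] at hzi ⊢
      exact h2 hzi
  obtain ⟨z, hz, hze, hzh, hzw⟩ := hT
  have hAf : compose (restrictAway {h} z) Z f = s := by
    rw [compose_f D.ne (D.eq_zero z hz), hZf, hsdef]
  obtain ⟨B, hB, hBh, hBo⟩ := D.mk_any (N.compose_mem _ (D.res_mem z hz) _ hZ)
    (by rw [hAf]; exact h0) hz (by rw [hAf, hzh]) le_compose (compose X X' h)
  refine ⟨B, hB, ?_, (hzw.compose hZE).congr hBo, fun _ => hBh⟩
  rw [hBo e heh, compose_of_eq (by rw [res_off heh, hze]), hZe]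

lemma elim_mem (D : LiftData N T f h)
    {X X' : SignVec α} (hX : X ∈ liftCov N T f h) (hX' : X' ∈ liftCov N T f h)
    {e : α} (he : e ∈ sep X X') :
    ∃ Z ∈ liftCov N T f h, Z e = 0 ∧ ∀ i ∉ sep X X', Z i = compose X X' i := by
  by_cases heh : e = h
  · subst heh
    obtain ⟨Z, hZ, hZe, hZE⟩ := D.elim_h hX hX' he
    exact ⟨Z, hZ, hZe, fun i hi => hZE i (by rintro rfl; exact hi he) hi⟩
  have key : ∀ Z : SignVec α, Elim h X X' Z → (h ∉ sep X X' → Z h = compose X X' h) →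
      ∀ i ∉ sep X X', Z i = compose X X' i := fun Z h1 h2 i hi => by
    by_cases hih : i = h
    · subst hih; exact h2 hi
    · exact h1 i hih hi
  by_cases hf : f ∈ sep X X'
  · obtain ⟨Z, hZ, hZe, hZE, hZh⟩ := D.elim_sep hX hX' hf heh he
    exact ⟨Z, hZ, hZe, key Z hZE hZh⟩
  by_cases h0 : compose X X' f = 0
  · have hXf : X f = 0 := by
      by_contra hne
      rw [compose_of_ne hne] at h0
      exact hne h0
    have hXf' : X' f = 0 := by rwa [compose_of_eq hXf] at h0
    obtain ⟨Z, hZ, hZe, hZo⟩ := T.elim _ (mem_of_zero hX hXf) _ (mem_of_zero hX' hXf') e he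
    exact ⟨Z, D.of_mem hZ, hZe, hZo⟩
  · obtain ⟨Z, hZ, hZe, hZE, hZh⟩ := D.elim_notSep hX hX' hf h0 heh he
    exact ⟨Z, hZ, hZe, key Z hZE hZh⟩

lemma neg_mem {X : SignVec α} (hX : X ∈ liftCov N T f h) : -X ∈ liftCov N T f h := by
  refine ⟨res_neg (α := α) ▸ N.neg_mem _ hX.1, ?_⟩
  have hs0 (a : SignType) : -a = 0 ↔ a = 0 := by revert a; decide
  simp only [Pi.neg_apply, hs0, neg_inj, neg_neg, ne_eq]
  rcases hX.2 with ⟨h1, h2⟩ | ⟨h1, h2 | ⟨y, hy, hyh, hyX⟩⟩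
  · exact Or.inl ⟨h1, T.neg_mem _ h2⟩
  · exact Or.inr ⟨h1, Or.inl h2⟩
  · refine Or.inr ⟨h1, Or.inr ⟨-y, T.neg_mem _ hy, by simp [hyh], fun i hi h0 => ?_⟩⟩
    simp only [Pi.neg_apply, hs0] at h0 ⊢
    rw [hyX i hi h0]

/-! ### The lifted oriented matroid -/

/-- The lift of `T` to an extension of `N` by `h`. -/
def matroid (D : LiftData N T f h) : OrientedMatroid α where
  ground := insert h N.ground
  ground_finite := N.ground_finite.insert h
  covectors := liftCov N T f h
  supp_subset := fun X hX i hi => by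
    by_cases hih : i = h
    · exact Or.inl hih
    · exact Or.inr (N.supp_subset _ hX.1 (by
        change restrictAway {h} X i ≠ 0
        rwa [res_off hih]))
  zero_mem := D.of_mem T.zero_mem
  neg_mem := fun _ hX => neg_mem hX
  compose_mem := fun _ hX _ hX' => compose_mem hX hX'
  elim := fun _ hX _ hX' _ he => D.elim_mem hX hX' he

lemma matroid_del (D : LiftData N T f h) : D.matroid.del {h} = N := by
  refine ext_cov (Set.insert_sdiff_self_of_notMem D.notMem) fun X => ⟨?_, fun hX => ?_⟩
  · rintro ⟨Y, hY, rfl⟩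
    exact hY.1
  · obtain ⟨Z, hZ, hZX⟩ := D.exists_lift hX
    exact ⟨Z, hZ, by rw [res_congr hZX, D.res_self hX]⟩

lemma matroid_con (D : LiftData N T f h) (hg : T.ground = insert h (N.ground \ {f})) :
    D.matroid.con {f} = T := by
  refine ext_cov ?_ fun X => ⟨fun hX => mem_of_zero hX.1 (hX.2 f rfl), fun hX =>
    ⟨D.of_mem hX, fun a ha => by rw [Set.mem_singleton_iff.1 ha, D.eq_zero X hX]⟩⟩
  rw [hg]
  exact Set.insert_sdiff_of_notMem _ fun hh => D.ne (Set.mem_singleton_iff.1 hh).symm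

/-- The new element is not a coloop of the lift if it is not a coloop of `T`. -/
lemma matroid_noColoop (D : LiftData N T f h)
    (hno : ∀ Y ∈ T.covectors, (∀ i, i ≠ h → Y i = 0) → Y h = 0) :
    ∀ Y ∈ D.matroid.covectors, (∀ i, i ≠ h → Y i = 0) → Y h = 0 := fun Y hY hY0 =>
  hno Y (mem_of_zero hY (hY0 f D.ne)) hY0

lemma matroid_genPos (D : LiftData N T f h) (hg : h ∈ T.ground) (hTN : T.del {h} = N.con {f})
    (hno : ∀ Y ∈ T.covectors, (∀ i, i ≠ h → Y i = 0) → Y h = 0) (hT : GenPos T h) :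
    GenPos D.matroid h := by
  rw [genPos_iff (Or.inl rfl) (D.matroid_noColoop hno), D.matroid_del]
  intro Y hY hYc hYh
  rw [genPos_iff hg hno, hTN] at hT
  by_cases hf : Y f = 0
  · refine hT Y (mem_of_zero hY hf) ⟨⟨hYc.1, fun a ha => ?_⟩, hYc.2.1, fun Z hZ => ?_⟩ hYh
    · rw [Set.mem_singleton_iff.1 ha, hf]
    · exact hYc.2.2 Z hZ.1
  · -- The witness below `Y` contradicts the minimality of the support of `Y`.
    obtain ⟨y, hy, hyh, hyY⟩ := witness hY hf (by rw [hYh]; exact Ne.symm hf)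
    have hne : restrictAway {h} y ≠ 0 := fun h0 => by
      have hyh0 := hno y hy fun i hi => by rw [← res_off (X := y) hi, h0]; rfl
      rw [hyh] at hyh0
      revert hf hyh0; generalize Y f = a; revert a; decide
    have hsub : supp (restrictAway {h} y) ⊆ supp Y := fun i hi => by
      obtain ⟨h1, h2⟩ := res_ne_zero hi
      change Y i ≠ 0
      rwa [← hyY i (by simpa using h1) h2]
    have hmem : f ∈ supp (restrictAway {h} y) :=
      (hYc.2.2 _ (D.res_mem y hy) hne hsub).symm ▸ hf
    exact (res_ne_zero hmem).2 (D.eq_zero y hy)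

end LiftData

/-- A one-element extension of a contraction `N / f` in general position lifts to `N`. -/
theorem exists_lift_extension {N T : OrientedMatroid α} {f h : α} (hfh : f ≠ h)
    (hN : h ∉ N.ground) (hE : IsExtension (N.con {f}) h T) (hG : GenPos T h) :
    ∃ L : OrientedMatroid α, IsExtension N h L ∧ GenPos L h ∧ IsContraction L {f} T := by
  obtain ⟨-, hground, hrank, hdel⟩ := hE
  have hTN : T.del {h} = N.con {f} := (eq_del hdel).symm
  have D : LiftData N T f h := by
    have hres : ∀ y ∈ T.covectors, restrictAway {h} y ∈ (N.con {f}).covectors := fun y hy =>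
      hTN ▸ ⟨y, hy, rfl⟩
    refine ⟨hfh, hN, fun y hy => (hres y hy).1, fun y hy => ?_, fun Y hY hYf => ?_⟩
    · rw [← res_off (X := y) hfh]
      exact (hres y hy).2 f rfl
    · have hY' : Y ∈ (T.del {h}).covectors := by
        rw [hTN]
        exact ⟨hY, fun a ha => by rw [Set.mem_singleton_iff.1 ha, hYf]⟩
      obtain ⟨y, hy, rfl⟩ := hY'
      exact ⟨y, hy, fun i hi => (res_off hi).symm⟩
  have hno := rank_del_iff.1 (show T.rank = (T.del {h}).rank by rw [hTN, hrank])
  refine ⟨D.matroid, ⟨hN, rfl, ?_, ?_⟩, ?_, ?_⟩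
  · have := rank_del_iff.2 (D.matroid_noColoop hno)
    rwa [D.matroid_del] at this
  · have := isDeletion_del D.matroid {h}
    rwa [D.matroid_del] at this
  · exact D.matroid_genPos (hground ▸ Or.inl rfl) hTN hno hG
  · have := isContraction_con D.matroid (Set.finite_singleton f)
    rwa [D.matroid_con hground] at this

end Lift

end OrientedMatroid

/-- Let `M` be an oriented matroid program of rank `r` on
`[n] ∪ {f, g}` (`f = n`, `g = n + 1`, `Mf = M ∖ f`), with `Mg = M / g` and
`Mfg = M / {f, g}`.  If `Mtilde` is an extension of `M / {f, g}` by the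
element `h = n + 2` in general position, then there exists an extension
`Mhat` of `M / g` by `h` in general position with `Mhat / f = Mtilde`. -/
theorem lift_extension (M Mf Mg Mfg Mtilde : OrientedMatroid ℕ) (n r : ℕ)
    (hProg : IsProgram M Mf n r)
    (hMg : IsContraction M {n + 1} Mg)
    (hMfg : IsContraction M {n, n + 1} Mfg)
    (hExt : IsExtension Mfg (n + 2) Mtilde)
    (hGP : GenPos Mtilde (n + 2)) :
    ∃ Mhat : OrientedMatroid ℕ, IsExtension Mg (n + 2) Mhat ∧
      GenPos Mhat (n + 2) ∧ IsContraction Mhat {n} Mtilde := by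
  have h1 := eq_con (Set.finite_singleton _) hMg
  have h2 := eq_con (Set.toFinite _) hMfg
  have h3 : Mfg = Mg.con {n} := by
    rw [h1, h2]
    refine ext_cov ?_ fun X => ?_
    · ext i
      simp only [con, Set.mem_sdiff, Set.mem_insert_iff, Set.mem_singleton_iff]
      tauto
    · simp only [con, Set.mem_ofPred_eq, Set.mem_insert_iff, Set.mem_singleton_iff,
        forall_eq_or_imp, forall_eq]
      tauto
  refine exists_lift_extension (by omega) (fun hh => ?_) (h3 ▸ hExt) hGP
  rw [hMg.1, hProg.1] at hh
  simp only [nset, Set.mem_sdiff, Set.mem_union, Set.mem_ofPred_eq, Set.mem_insert_iff,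
    Set.mem_singleton_iff] at hh
  omega

end OMHK
end
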